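/- arXiv:2502.05081 — 2 statements merged into one kernel-verified Lean document; each statement's English description precedes it below -/
import Mathlib

section
/- Let D ⊂ ℝ² be open and bounded with closure contained in (0,∞)². Then there exists a constant C̃ > 0 such that for every α > 0, every (k,h), (k̄,h̄) ∈ D, every v ∈ ℝ, and all real symmetric 2×2 matrices Q, Q̄ satisfying the block matrix inequality [[Q, 0],[0, −Q̄]] ≤ 3α·[[I, −I],[−I, I]] in the positive-semidefinite (Loewner) order on symmetric 4×4 matrices (I the 2×2 identity), one has F̃(Q, α·(k−k̄, h−h̄), v, (k,h)) − F̃(Q̄, α·(k−k̄, h−h̄), v, (k̄,h̄)) ≤ C̃·( α·|(k−k̄, h−h̄)|² + |(k−k̄, h−h̄)| ), where |·| is the Euclidean norm on ℝ². -/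
open MeasureTheory ProbabilityTheory Real Set Matrix
open scoped ENNReal NNReal

noncomputable section

namespace HabitModel

/-- The function `g(c; h, p_k, p_h) = -c·(p_k - ρ·p_h) - (1/(σ-1))·(h^γ/c)^(σ-1)`. -/
def gFun (ρ σ γ : ℝ) (c h pk ph : ℝ) : ℝ :=
  -c * (pk - ρ * ph) - (σ - 1)⁻¹ * (h ^ γ / c) ^ (σ - 1)

/-- The maximized Hamiltonian term `G(k,h,p_k,p_h)`. -/
def GFun (ρ σ γ R : ℝ) (k h pk ph : ℝ) : ℝ :=
  if pk - ρ * ph ≤ h ^ (γ * (σ - 1)) * (R * k) ^ (-σ) then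
    -(R * k) * (pk - ρ * ph) - (σ - 1)⁻¹ * (h ^ γ / (R * k)) ^ (σ - 1)
  else
    -(1 + (σ - 1)⁻¹) * (h ^ γ * (pk - ρ * ph)) ^ (1 - 1 / σ)

/-- The maximum value Hamiltonian `H_max(k,h,p,Q)` (only the diagonal entries of `Q` enter). -/
def Hmax (B β₁ β₂ ρ σ γ R : ℝ) (k h : ℝ) (p : ℝ × ℝ)
    (Q : Matrix (Fin 2) (Fin 2) ℝ) : ℝ :=
  B * k * p.1 - ρ * h * p.2 + (1 / 2) * β₁ ^ 2 * k ^ 2 * Q 0 0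
    + (1 / 2) * β₂ ^ 2 * h ^ 2 * Q 1 1 + GFun ρ σ γ R k h p.1 p.2

/-- `F̃(Q, p, v, (k,h)) = -θ·v + H_max(k,h,p,Q)`. -/
def Ftilde (B β₁ β₂ ρ θ σ γ R : ℝ) (Q : Matrix (Fin 2) (Fin 2) ℝ)
    (p : ℝ × ℝ) (v : ℝ) (z : ℝ × ℝ) : ℝ :=
  -θ * v + Hmax B β₁ β₂ ρ σ γ R z.1 z.2 p Q

/-!
`G(k, h, p)` is the maximum of `g(c; h, p)` over the consumption rates `0 < c ≤ R k`: `g` is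
concave in `c`, and the case split defining `G` is the sign of `∂g/∂c` at `c = R k`. To compare `G`
at two states, take the optimal fraction `t = c / (R k)` at the first one and use the same fraction
at the second. The power term of `g` is then `t ^ (1 - σ)` times a function of the state that is
Lipschitz on compact sets, and `t ^ (1 - σ)` is at most an affine function of `|p|`: if `σ > 1` this
is the optimality of `t` against `t = 1`, and if `σ < 1` it is at most `1`. Hence `G` is Lipschitz
in the state with a constant of order `1 + |p|`, which is `1 + α |z - z'|` for `p = α (z - z')`.
The second-order terms are controlled by testing the block matrix inequality on the vectors
`(k, 0, k', 0)` and `(0, h, 0, h')`.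
-/

lemma dotProduct_mulVec_sub_le_of_posSemidef {n : Type*} [Fintype n] [DecidableEq n] {a : ℝ}
    {Q Q' : Matrix n n ℝ}
    (hQ : (a • fromBlocks (1 : Matrix n n ℝ) (-1) (-1) 1 - fromBlocks Q 0 0 (-Q')).PosSemidef)
    (x y : n → ℝ) :
    x ⬝ᵥ Q *ᵥ x - y ⬝ᵥ Q' *ᵥ y ≤ a * ((x - y) ⬝ᵥ (x - y)) := by
  have h := hQ.dotProduct_mulVec_nonneg (Sum.elim x y)
  simp only [star_trivial, sub_mulVec, smul_mulVec, fromBlocks_mulVec, Sum.elim_comp_inl,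
    Sum.elim_comp_inr, dotProduct_sub, dotProduct_smul, sumElim_dotProduct_sumElim, one_mulVec,
    neg_mulVec, zero_mulVec, dotProduct_add, dotProduct_neg, dotProduct_zero, smul_eq_mul] at h
  simp only [sub_dotProduct, dotProduct_sub]
  linarith

lemma sq_mul_diag_sub_le_of_posSemidef {n : Type*} [Finite n] [DecidableEq n] {a : ℝ}
    {Q Q' : Matrix n n ℝ}
    (hQ : (a • fromBlocks (1 : Matrix n n ℝ) (-1) (-1) 1 - fromBlocks Q 0 0 (-Q')).PosSemidef)
    (i : n) (x y : ℝ) :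
    x ^ 2 * Q i i - y ^ 2 * Q' i i ≤ a * (x - y) ^ 2 := by
  have := Fintype.ofFinite n
  have h := dotProduct_mulVec_sub_le_of_posSemidef hQ (Pi.single i x) (Pi.single i y)
  simp only [← Pi.single_sub, single_dotProduct, mulVec_single, Pi.smul_apply, col_apply,
    MulOpposite.smul_eq_mul_unop, MulOpposite.unop_op, Pi.single_eq_same] at h
  linarith

lemma dist_le_sqrt_sq_add_sq (z z' : ℝ × ℝ) :
    dist z z' ≤ √((z.1 - z'.1) ^ 2 + (z.2 - z'.2) ^ 2) :=
  max_le (abs_le_sqrt (le_add_of_nonneg_right (sq_nonneg _)))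
    (abs_le_sqrt (le_add_of_nonneg_left (sq_nonneg _)))

lemma inv_mul_rpow_sub_one_le {p x : ℝ} (hp : p ≤ 1) (hp₀ : p ≠ 0) (hx : 0 < x) :
    p⁻¹ * (x ^ p - 1) ≤ x - 1 := by
  rcases hp₀.lt_or_gt with hneg | hpos
  · rw [← div_eq_inv_mul, div_le_iff_of_neg hneg, rpow_def_of_pos hx]
    have hexp := add_one_le_exp (log x * p)
    have hlog := mul_le_mul_of_nonpos_right (log_le_sub_one_of_pos hx) hneg.le
    linarith
  · rw [← div_eq_inv_mul, div_le_iff₀ hpos]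
    have hbernoulli := rpow_one_add_le_one_add_mul_self (s := x - 1) (by linarith) hpos.le hp
    rw [add_sub_cancel] at hbernoulli
    linarith

lemma div_mul_rpow_sub_one {σ t u m : ℝ} (ht : 0 < t) (hu : 0 ≤ u) (hm : 0 < m) :
    (u / (t * m)) ^ (σ - 1) = t ^ (1 - σ) * (u / m) ^ (σ - 1) := by
  rw [mul_comm t, ← div_div, div_rpow (div_nonneg hu hm.le) ht.le, ← neg_sub σ 1, rpow_neg ht.le,
    div_eq_inv_mul]

section Maximum

variable {ρ σ γ R c c₀ k h pk ph : ℝ}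

/-- The marginal value `h ^ (γ (σ - 1)) c ^ (-σ)` of consumption, so that
`∂g/∂c = marginalValue σ γ c h - (p_k - ρ p_h)`. -/
def marginalValue (σ γ c h : ℝ) : ℝ := h ^ (γ * (σ - 1)) * c ^ (-σ)

lemma marginalValue_mul_self (hc : 0 < c) (hh : 0 < h) :
    marginalValue σ γ c h * c = (h ^ γ / c) ^ (σ - 1) := by
  rw [marginalValue, div_rpow (rpow_nonneg hh.le _) hc.le, ← rpow_mul hh.le, mul_assoc,
    ← rpow_add_one hc.ne', neg_add_eq_sub, ← neg_sub σ 1, rpow_neg hc.le, div_eq_mul_inv]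

lemma marginalValue_le_iff (hσ : 0 < σ) (hc : 0 < c) (hc₀ : 0 < c₀) (hh : 0 < h) :
    marginalValue σ γ c h ≤ marginalValue σ γ c₀ h ↔ c₀ ≤ c := by
  rw [marginalValue, marginalValue, mul_le_mul_iff_right₀ (rpow_pos_of_pos hh _),
    rpow_le_rpow_iff_of_neg hc hc₀ (neg_neg_of_pos hσ)]

lemma exists_marginalValue_eq (γ : ℝ) {q : ℝ} (hσ : 0 < σ) (hh : 0 < h) (hq : 0 < q) :
    ∃ c > 0, marginalValue σ γ c h = q := by
  have hw : 0 < h ^ (γ * (σ - 1)) := rpow_pos_of_pos hh _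
  refine ⟨(q / h ^ (γ * (σ - 1))) ^ (-σ)⁻¹, rpow_pos_of_pos (div_pos hq hw) _, ?_⟩
  rw [marginalValue, rpow_inv_rpow (div_pos hq hw).le (neg_ne_zero.2 hσ.ne'),
    mul_div_cancel₀ _ hw.ne']

lemma gFun_le_tangent (hσ : 0 ≤ σ) (hσ₁ : σ ≠ 1) (hc : 0 < c) (hc₀ : 0 < c₀) (hh : 0 < h) :
    gFun ρ σ γ c h pk ph ≤ gFun ρ σ γ c₀ h pk ph
      + (marginalValue σ γ c₀ h - (pk - ρ * ph)) * (c - c₀) := by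
  have hu : 0 < h ^ γ := rpow_pos_of_pos hh _
  have hA : 0 ≤ (h ^ γ / c₀) ^ (σ - 1) := by positivity
  have hpow : (h ^ γ / c) ^ (σ - 1) = (c / c₀) ^ (1 - σ) * (h ^ γ / c₀) ^ (σ - 1) := by
    rw [← div_mul_rpow_sub_one (div_pos hc hc₀) hu.le hc₀, div_mul_cancel₀ _ hc₀.ne']
  have hslope : marginalValue σ γ c₀ h * (c - c₀) = (h ^ γ / c₀) ^ (σ - 1) * (c / c₀ - 1) := by
    rw [← marginalValue_mul_self hc₀ hh]
    field_simp
  have htangent := mul_le_mul_of_nonneg_left (inv_mul_rpow_sub_one_le (by linarith)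
    (sub_ne_zero.2 hσ₁.symm) (div_pos hc hc₀)) hA
  rw [← neg_sub σ 1, inv_neg, neg_sub] at htangent
  rw [gFun, gFun, hpow]
  linarith

lemma gFun_eq_of_marginalValue_eq (hσ : σ ≠ 0) (hc : 0 < c) (hh : 0 < h)
    (hfoc : marginalValue σ γ c h = pk - ρ * ph) :
    gFun ρ σ γ c h pk ph = -(1 + (σ - 1)⁻¹) * (h ^ γ * (pk - ρ * ph)) ^ (1 - 1 / σ) := by
  have hu : 0 < h ^ γ := rpow_pos_of_pos hh _
  have hbase : h ^ γ * (pk - ρ * ph) = (h ^ γ / c) ^ σ := by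
    rw [← hfoc, eq_div_of_mul_eq hc.ne' (marginalValue_mul_self hc hh),
      rpow_sub_one (div_pos hu hc).ne']
    field_simp
  have hexp : σ * (1 - 1 / σ) = σ - 1 := by field_simp
  rw [hbase, ← rpow_mul (div_pos hu hc).le, hexp, gFun, ← hfoc, neg_mul, mul_comm c,
    marginalValue_mul_self hc hh]
  ring

theorem isGreatest_GFun (hσ : 0 < σ) (hσ₁ : σ ≠ 1) (hk : 0 < R * k) (hh : 0 < h) :
    IsGreatest ((fun c => gFun ρ σ γ c h pk ph) '' Ioc 0 (R * k)) (GFun ρ σ γ R k h pk ph) := by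
  rw [GFun, ← marginalValue]
  split_ifs with hcorner
  · refine ⟨⟨R * k, ⟨hk, le_rfl⟩, rfl⟩, ?_⟩
    rintro _ ⟨c, ⟨hc, hck⟩, rfl⟩
    exact (gFun_le_tangent hσ.le hσ₁ hc hk hh).trans (add_le_of_nonpos_right
      (mul_nonpos_of_nonneg_of_nonpos (sub_nonneg.2 hcorner) (sub_nonpos.2 hck)))
  · rw [not_le] at hcorner
    have hq : 0 < pk - ρ * ph :=
      (mul_pos (rpow_pos_of_pos hh _) (rpow_pos_of_pos hk _)).trans hcorner
    obtain ⟨c₀, hc₀, hfoc⟩ := exists_marginalValue_eq γ hσ hh hq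
    have hc₀k : c₀ ≤ R * k := (marginalValue_le_iff hσ hk hc₀ hh).1 (hfoc ▸ hcorner.le)
    rw [← gFun_eq_of_marginalValue_eq hσ.ne' hc₀ hh hfoc]
    refine ⟨⟨c₀, ⟨hc₀, hc₀k⟩, rfl⟩, ?_⟩
    rintro _ ⟨c, ⟨hc, -⟩, rfl⟩
    simpa only [hfoc, sub_self, zero_mul, add_zero] using
      gFun_le_tangent (ρ := ρ) (γ := γ) (pk := pk) (ph := ph) hσ.le hσ₁ hc hc₀ hh

end Maximum

section Lipschitz

variable {ρ σ γ R t : ℝ} {z z' : ℝ × ℝ} {K : Set (ℝ × ℝ)}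

/-- The power `(h ^ γ / (R k)) ^ (σ - 1)` occurring in `g` at the maximal consumption rate
`c = R k`, as a function of the state `z = (k, h)`. -/
def maxRatePower (σ γ R : ℝ) (z : ℝ × ℝ) : ℝ := (z.2 ^ γ / (R * z.1)) ^ (σ - 1)

lemma maxRatePower_pos (hR : 0 < R) (hz : z ∈ Ioi (0 : ℝ) ×ˢ Ioi (0 : ℝ)) :
    0 < maxRatePower σ γ R z :=
  rpow_pos_of_pos (div_pos (rpow_pos_of_pos hz.2 _) (mul_pos hR hz.1)) _

lemma gFun_mul_maxRate (pk ph : ℝ) (hR : 0 < R) (hz : z ∈ Ioi (0 : ℝ) ×ˢ Ioi (0 : ℝ))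
    (ht : 0 < t) :
    gFun ρ σ γ (t * (R * z.1)) z.2 pk ph = -(t * (R * z.1)) * (pk - ρ * ph)
      - (σ - 1)⁻¹ * (t ^ (1 - σ) * maxRatePower σ γ R z) := by
  rw [gFun, div_mul_rpow_sub_one ht (rpow_nonneg (le_of_lt hz.2) _) (mul_pos hR hz.1),
    maxRatePower]

lemma rpow_one_sub_le_of_gFun_le {pk ph : ℝ} (hσ₁ : σ ≠ 1) (hR : 0 < R)
    (hz : z ∈ Ioi (0 : ℝ) ×ˢ Ioi (0 : ℝ)) (ht : 0 < t) (ht₁ : t ≤ 1)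
    (hopt : gFun ρ σ γ (R * z.1) z.2 pk ph ≤ gFun ρ σ γ (t * (R * z.1)) z.2 pk ph) :
    t ^ (1 - σ) ≤ 1 + |σ - 1| * (R * z.1 / maxRatePower σ γ R z * |pk - ρ * ph|) := by
  have hψ : 0 < maxRatePower σ γ R z := maxRatePower_pos hR hz
  have hm : 0 < R * z.1 := mul_pos hR hz.1
  rcases hσ₁.lt_or_gt with hlt | hgt
  · exact (rpow_le_one ht.le ht₁ (sub_nonneg.2 hlt.le)).trans
      (le_add_of_nonneg_right (by positivity))
  · have hs : 0 < σ - 1 := sub_pos.2 hgt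
    have hfull := gFun_mul_maxRate (ρ := ρ) (σ := σ) (γ := γ) pk ph hR hz one_pos
    rw [one_mul, one_rpow, one_mul] at hfull
    rw [hfull, gFun_mul_maxRate pk ph hR hz ht] at hopt
    have hdrift : (1 - t) * (R * z.1 * (pk - ρ * ph)) ≤ R * z.1 * |pk - ρ * ph| := by
      calc (1 - t) * (R * z.1 * (pk - ρ * ph))
          ≤ (1 - t) * (R * z.1 * |pk - ρ * ph|) := by
            have := sub_nonneg.2 ht₁
            gcongr
            exact le_abs_self _
        _ ≤ R * z.1 * |pk - ρ * ph| :=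
            mul_le_of_le_one_left (by positivity) (by linarith)
    have hgain : (σ - 1)⁻¹ * ((t ^ (1 - σ) - 1) * maxRatePower σ γ R z)
        ≤ R * z.1 * |pk - ρ * ph| := by linarith
    rw [inv_mul_le_iff₀ hs, ← le_div_iff₀ hψ] at hgain
    rw [abs_of_pos hs, ← sub_le_iff_le_add']
    exact hgain.trans_eq (by ring)

lemma GFun_sub_le (p : ℝ × ℝ) (hσ : 0 < σ) (hσ₁ : σ ≠ 1) (hR : 0 < R)
    (hz : z ∈ Ioi (0 : ℝ) ×ˢ Ioi (0 : ℝ)) (hz' : z' ∈ Ioi (0 : ℝ) ×ˢ Ioi (0 : ℝ)) :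
    GFun ρ σ γ R z.1 z.2 p.1 p.2 - GFun ρ σ γ R z'.1 z'.2 p.1 p.2 ≤
      R * |z.1 - z'.1| * |p.1 - ρ * p.2| + |σ - 1|⁻¹ *
        ((1 + |σ - 1| * (R * z.1 / maxRatePower σ γ R z * |p.1 - ρ * p.2|)) *
          |maxRatePower σ γ R z - maxRatePower σ γ R z'|) := by
  have hm : 0 < R * z.1 := mul_pos hR hz.1
  have hm' : 0 < R * z'.1 := mul_pos hR hz'.1
  obtain ⟨⟨c, ⟨hc, hcm⟩, hGz⟩, hmax⟩ :=
    isGreatest_GFun (ρ := ρ) (γ := γ) (pk := p.1) (ph := p.2) hσ hσ₁ hm hz.2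
  obtain ⟨t, ht, ht₁, rfl⟩ : ∃ t, 0 < t ∧ t ≤ 1 ∧ t * (R * z.1) = c :=
    ⟨c / (R * z.1), div_pos hc hm, (div_le_one hm).2 hcm, div_mul_cancel₀ _ hm.ne'⟩
  have hGz' : gFun ρ σ γ (t * (R * z'.1)) z'.2 p.1 p.2 ≤ GFun ρ σ γ R z'.1 z'.2 p.1 p.2 :=
    (isGreatest_GFun hσ hσ₁ hm' hz'.2).2
      ⟨_, ⟨mul_pos ht hm', mul_le_of_le_one_left hm'.le ht₁⟩, rfl⟩
  have hT := rpow_one_sub_le_of_gFun_le hσ₁ hR hz ht ht₁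
    ((hmax ⟨_, ⟨hm, le_rfl⟩, rfl⟩).trans_eq hGz.symm)
  have hlinear : -(t * (R * ((z.1 - z'.1) * (p.1 - ρ * p.2)))) ≤
      R * |z.1 - z'.1| * |p.1 - ρ * p.2| := by
    refine (neg_le_abs _).trans ?_
    rw [abs_mul, abs_mul, abs_mul, abs_of_pos ht, abs_of_pos hR, mul_assoc]
    exact mul_le_of_le_one_left (by positivity) ht₁
  have hpower : -((σ - 1)⁻¹ *
        (t ^ (1 - σ) * (maxRatePower σ γ R z - maxRatePower σ γ R z'))) ≤
      |σ - 1|⁻¹ * ((1 + |σ - 1| * (R * z.1 / maxRatePower σ γ R z * |p.1 - ρ * p.2|)) *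
        |maxRatePower σ γ R z - maxRatePower σ γ R z'|) := by
    refine (neg_le_abs _).trans ?_
    rw [abs_mul, abs_mul, abs_inv, abs_of_pos (rpow_pos_of_pos ht _)]
    gcongr
  beta_reduce at hGz
  rw [gFun_mul_maxRate _ _ hR hz ht] at hGz
  rw [gFun_mul_maxRate _ _ hR hz' ht] at hGz'
  linarith

lemma contDiffOn_maxRatePower (hR : 0 < R) :
    ContDiffOn ℝ 1 (maxRatePower σ γ R) (Ioi (0 : ℝ) ×ˢ Ioi (0 : ℝ)) := by
  have hm : ∀ z ∈ Ioi (0 : ℝ) ×ˢ Ioi (0 : ℝ), R * z.1 ≠ 0 := fun z hz => (mul_pos hR hz.1).ne'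
  refine ((contDiffOn_snd.rpow_const_of_ne fun z hz => ne_of_gt hz.2).div
    (contDiffOn_const.mul contDiffOn_fst) hm).rpow_const_of_ne fun z hz => ?_
  exact div_ne_zero (rpow_pos_of_pos hz.2 _).ne' (hm z hz)

lemma exists_lipschitzOnWith_maxRatePower (σ γ : ℝ) (hR : 0 < R) (hK : IsCompact K)
    (hKpos : K ⊆ Ioi (0 : ℝ) ×ˢ Ioi (0 : ℝ)) :
    ∃ L, LipschitzOnWith L (maxRatePower σ γ R) K :=
  (((contDiffOn_maxRatePower hR).locallyLipschitzOn
    ((convex_Ioi 0).prod (convex_Ioi 0))).mono hKpos).exists_lipschitzOnWith_of_compact hK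

lemma exists_div_maxRatePower_le (σ γ : ℝ) (hR : 0 < R) (hK : IsCompact K)
    (hKpos : K ⊆ Ioi (0 : ℝ) ×ˢ Ioi (0 : ℝ)) :
    ∃ M, 0 ≤ M ∧ ∀ z ∈ K, R * z.1 / maxRatePower σ γ R z ≤ M := by
  have hcont : ContinuousOn (fun z => R * z.1 / maxRatePower σ γ R z) K :=
    (continuousOn_const.mul continuousOn_fst).div
      ((contDiffOn_maxRatePower hR).continuousOn.mono hKpos)
      fun z hz => (maxRatePower_pos hR (hKpos hz)).ne'
  obtain ⟨M, hM⟩ := hK.exists_bound_of_continuousOn hcont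
  exact ⟨|M|, abs_nonneg M, fun z hz => (le_abs_self _).trans ((hM z hz).trans (le_abs_self M))⟩

lemma abs_fst_sub_mul_snd_le (ρ : ℝ) (p : ℝ × ℝ) : |p.1 - ρ * p.2| ≤ (1 + |ρ|) * ‖p‖ :=
  calc |p.1 - ρ * p.2| ≤ |p.1| + |ρ| * |p.2| := (abs_sub _ _).trans_eq (by rw [abs_mul])
    _ ≤ ‖p‖ + |ρ| * ‖p‖ := by
        gcongr
        exacts [norm_fst_le p, norm_snd_le p]
    _ = (1 + |ρ|) * ‖p‖ := by ring

theorem exists_GFun_sub_le_mul_dist (ρ γ : ℝ) (hσ : 0 < σ) (hσ₁ : σ ≠ 1) (hR : 0 < R)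
    (hK : IsCompact K) (hKpos : K ⊆ Ioi (0 : ℝ) ×ˢ Ioi (0 : ℝ)) :
    ∃ C, 0 ≤ C ∧ ∀ z ∈ K, ∀ z' ∈ K, ∀ p : ℝ × ℝ,
      GFun ρ σ γ R z.1 z.2 p.1 p.2 - GFun ρ σ γ R z'.1 z'.2 p.1 p.2
        ≤ C * (1 + ‖p‖) * dist z z' := by
  obtain ⟨L, hL⟩ := exists_lipschitzOnWith_maxRatePower σ γ hR hK hKpos
  obtain ⟨M, hM₀, hM⟩ := exists_div_maxRatePower_le σ γ hR hK hKpos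
  have : 0 < |σ - 1| := abs_pos.2 (sub_ne_zero.2 hσ₁)
  refine ⟨R * (1 + |ρ|) + |σ - 1|⁻¹ * L + M * (1 + |ρ|) * L, by positivity,
    fun z hz z' hz' p => ?_⟩
  have hψ : |maxRatePower σ γ R z - maxRatePower σ γ R z'| ≤ L * dist z z' :=
    hL.dist_le_mul z hz z' hz'
  calc GFun ρ σ γ R z.1 z.2 p.1 p.2 - GFun ρ σ γ R z'.1 z'.2 p.1 p.2
      ≤ _ := GFun_sub_le p hσ hσ₁ hR (hKpos hz) (hKpos hz')
    _ ≤ R * dist z z' * ((1 + |ρ|) * ‖p‖) + |σ - 1|⁻¹ *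
          ((1 + |σ - 1| * (M * ((1 + |ρ|) * ‖p‖))) * (L * dist z z')) := by
        gcongr
        exacts [le_max_left _ _, abs_fst_sub_mul_snd_le ρ p, hM z hz,
          abs_fst_sub_mul_snd_le ρ p]
    _ = (R * (1 + |ρ|) * ‖p‖ + |σ - 1|⁻¹ * L + M * (1 + |ρ|) * L * ‖p‖) * dist z z' := by
        field_simp
        ring
    _ ≤ (R * (1 + |ρ|) + |σ - 1|⁻¹ * L + M * (1 + |ρ|) * L) * (1 + ‖p‖) * dist z z' := by
        gcongr
        have : 0 ≤ R * (1 + |ρ|) + |σ - 1|⁻¹ * L * ‖p‖ + M * (1 + |ρ|) * L := by positivity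
        linarith

end Lipschitz

lemma drift_sub_le (B ρ : ℝ) (z z' p : ℝ × ℝ) :
    (B * z.1 * p.1 - ρ * z.2 * p.2) - (B * z'.1 * p.1 - ρ * z'.2 * p.2)
      ≤ (|B| + |ρ|) * ‖p‖ * dist z z' :=
  calc (B * z.1 * p.1 - ρ * z.2 * p.2) - (B * z'.1 * p.1 - ρ * z'.2 * p.2)
      = B * p.1 * (z.1 - z'.1) - ρ * p.2 * (z.2 - z'.2) := by ring
    _ ≤ |B * p.1 * (z.1 - z'.1)| + |ρ * p.2 * (z.2 - z'.2)| :=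
        (le_abs_self _).trans (abs_sub _ _)
    _ = |B| * |p.1| * |z.1 - z'.1| + |ρ| * |p.2| * |z.2 - z'.2| := by simp only [abs_mul]
    _ ≤ |B| * ‖p‖ * dist z z' + |ρ| * ‖p‖ * dist z z' := by
        gcongr
        exacts [norm_fst_le p, le_max_left _ _, norm_snd_le p, le_max_right _ _]
    _ = (|B| + |ρ|) * ‖p‖ * dist z z' := by ring

lemma diffusion_sub_le (β₁ β₂ : ℝ) {α : ℝ} (hα : 0 ≤ α) (z z' : ℝ × ℝ)
    {Q Q' : Matrix (Fin 2) (Fin 2) ℝ}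
    (hQ : ((3 * α) • fromBlocks (1 : Matrix (Fin 2) (Fin 2) ℝ) (-1) (-1) 1 -
      fromBlocks Q 0 0 (-Q')).PosSemidef) :
    ((1 / 2) * β₁ ^ 2 * z.1 ^ 2 * Q 0 0 + (1 / 2) * β₂ ^ 2 * z.2 ^ 2 * Q 1 1) -
        ((1 / 2) * β₁ ^ 2 * z'.1 ^ 2 * Q' 0 0 + (1 / 2) * β₂ ^ 2 * z'.2 ^ 2 * Q' 1 1)
      ≤ 3 / 2 * (β₁ ^ 2 + β₂ ^ 2) * (α * dist z z' ^ 2) :=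
  calc _ = 1 / 2 * β₁ ^ 2 * (z.1 ^ 2 * Q 0 0 - z'.1 ^ 2 * Q' 0 0) +
          1 / 2 * β₂ ^ 2 * (z.2 ^ 2 * Q 1 1 - z'.2 ^ 2 * Q' 1 1) := by ring
    _ ≤ 1 / 2 * β₁ ^ 2 * (3 * α * |z.1 - z'.1| ^ 2) +
          1 / 2 * β₂ ^ 2 * (3 * α * |z.2 - z'.2| ^ 2) := by
        rw [sq_abs, sq_abs]
        gcongr
        exacts [sq_mul_diag_sub_le_of_posSemidef hQ 0 _ _,
          sq_mul_diag_sub_le_of_posSemidef hQ 1 _ _]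
    _ ≤ 1 / 2 * β₁ ^ 2 * (3 * α * dist z z' ^ 2) + 1 / 2 * β₂ ^ 2 * (3 * α * dist z z' ^ 2) := by
        gcongr
        exacts [le_max_left _ _, le_max_right _ _]
    _ = 3 / 2 * (β₁ ^ 2 + β₂ ^ 2) * (α * dist z z' ^ 2) := by ring

theorem Ftilde_structural_general (B β₁ β₂ ρ θ σ γ R : ℝ) (hσ : 0 < σ) (hσ₁ : σ ≠ 1) (hR : 0 < R)
    {K : Set (ℝ × ℝ)} (hK : IsCompact K) (hKpos : K ⊆ Ioi (0 : ℝ) ×ˢ Ioi (0 : ℝ)) :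
    ∃ C > (0 : ℝ), ∀ α : ℝ, 0 ≤ α → ∀ z z' : ℝ × ℝ, z ∈ K → z' ∈ K → ∀ v : ℝ,
      ∀ Q Q' : Matrix (Fin 2) (Fin 2) ℝ,
        ((3 * α) • fromBlocks (1 : Matrix (Fin 2) (Fin 2) ℝ) (-1) (-1) 1 -
            fromBlocks Q 0 0 (-Q')).PosSemidef →
        Ftilde B β₁ β₂ ρ θ σ γ R Q (α * (z.1 - z'.1), α * (z.2 - z'.2)) v z -
            Ftilde B β₁ β₂ ρ θ σ γ R Q' (α * (z.1 - z'.1), α * (z.2 - z'.2)) v z'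
          ≤ C * (α * ((z.1 - z'.1) ^ 2 + (z.2 - z'.2) ^ 2) +
              √((z.1 - z'.1) ^ 2 + (z.2 - z'.2) ^ 2)) := by
  obtain ⟨C, hC, hG⟩ := exists_GFun_sub_le_mul_dist ρ γ hσ hσ₁ hR hK hKpos
  refine ⟨|B| + |ρ| + 3 / 2 * (β₁ ^ 2 + β₂ ^ 2) + C + 1, by positivity,
    fun α hα z z' hz hz' v Q Q' hQ => ?_⟩
  set p : ℝ × ℝ := (α * (z.1 - z'.1), α * (z.2 - z'.2))
  have hnorm : ‖p‖ = α * dist z z' := by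
    rw [dist_eq_norm, ← norm_smul_of_nonneg hα]
    rfl
  have hdrift := drift_sub_le B ρ z z' p
  have hdiffusion := diffusion_sub_le β₁ β₂ hα z z' hQ
  have hG := hG z hz z' hz' p
  rw [hnorm] at hdrift hG
  calc Ftilde B β₁ β₂ ρ θ σ γ R Q p v z - Ftilde B β₁ β₂ ρ θ σ γ R Q' p v z'
      ≤ (|B| + |ρ|) * (α * dist z z') * dist z z' +
          3 / 2 * (β₁ ^ 2 + β₂ ^ 2) * (α * dist z z' ^ 2) +
          C * (1 + α * dist z z') * dist z z' := by
        unfold Ftilde Hmax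
        linarith
    _ ≤ (|B| + |ρ| + 3 / 2 * (β₁ ^ 2 + β₂ ^ 2) + C + 1) *
          (α * dist z z' ^ 2 + dist z z') := by
        have : 0 ≤ (|B| + |ρ| + 3 / 2 * (β₁ ^ 2 + β₂ ^ 2) + 1) * dist z z' +
          α * dist z z' ^ 2 := by positivity
        linarith
    _ ≤ _ := by
        have hdist := dist_le_sqrt_sq_add_sq z z'
        have hsq := (le_sqrt dist_nonneg (by positivity)).1 hdist
        gcongr

/-- Structural estimate on `F̃` used for the comparison principle: under the standard block
matrix inequality `[[Q,0],[0,-Q̄]] ≤ 3α·[[I,-I],[-I,I]]` one has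
`F̃(Q, α(z-z̄), v, z) - F̃(Q̄, α(z-z̄), v, z̄) ≤ C̃(α·|z-z̄|² + |z-z̄|)`. -/
theorem Ftilde_structural (B β₁ β₂ ρ θ σ γ R : ℝ) (hB : 0 ≤ B) (hβ₁ : 0 < β₁)
    (hβ₂ : 0 < β₂) (hρ₀ : 0 < ρ) (hρ₁ : ρ < 1) (hθ : 0 < θ) (hσ : 1 < σ)
    (hγ₀ : 0 ≤ γ) (hγ₁ : γ < 1) (hR : 0 < R)
    (D : Set (ℝ × ℝ)) (hDopen : IsOpen D) (hDbdd : Bornology.IsBounded D)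
    (hDcl : closure D ⊆ Set.Ioi (0:ℝ) ×ˢ Set.Ioi (0:ℝ)) :
    ∃ C > (0:ℝ), ∀ α : ℝ, 0 < α → ∀ z z' : ℝ × ℝ, z ∈ D → z' ∈ D → ∀ v : ℝ,
      ∀ Q Q' : Matrix (Fin 2) (Fin 2) ℝ, Q.IsSymm → Q'.IsSymm →
        ((3 * α) • Matrix.fromBlocks (1 : Matrix (Fin 2) (Fin 2) ℝ) (-1) (-1) 1 -
            Matrix.fromBlocks Q 0 0 (-Q')).PosSemidef →
        Ftilde B β₁ β₂ ρ θ σ γ R Q (α * (z.1 - z'.1), α * (z.2 - z'.2)) v z -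
            Ftilde B β₁ β₂ ρ θ σ γ R Q' (α * (z.1 - z'.1), α * (z.2 - z'.2)) v z'
          ≤ C * (α * ((z.1 - z'.1) ^ 2 + (z.2 - z'.2) ^ 2) +
              Real.sqrt ((z.1 - z'.1) ^ 2 + (z.2 - z'.2) ^ 2)) := by
  obtain ⟨C, hC, hF⟩ := Ftilde_structural_general B β₁ β₂ ρ θ σ γ R (one_pos.trans hσ) hσ.ne' hR
    hDbdd.isCompact_closure hDcl
  exact ⟨C, hC, fun α hα z z' hz hz' v Q Q' _ _ =>
    hF α hα.le z z' (subset_closure hz) (subset_closure hz') v Q Q'⟩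

end HabitModel
end
end

section
/- Suppose Assumption 1 holds and that γ·(σ−1) ≤ 1. Then the value function V : (0,∞)² → (−∞,0] is (finite-valued and) continuous on (0,∞)². -/
open MeasureTheory ProbabilityTheory Real Set Matrix
open scoped ENNReal NNReal

noncomputable section

namespace HabitModel

/-- A standard Brownian motion with respect to the filtration `F`: adapted, with continuous
paths started at `0`, whose increments are independent of the past and Gaussian. -/
structure IsStdBM {Ω : Type*} {mΩ : MeasurableSpace Ω} (P : Measure Ω)
    (F : Filtration ℝ mΩ) (W : ℝ → Ω → ℝ) : Prop where
  adapted : Adapted F W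
  cont : ∀ ω, Continuous fun t => W t ω
  init : ∀ ω, W 0 ω = 0
  indep_incr : ∀ s t : ℝ, 0 ≤ s → s ≤ t →
    Indep (MeasurableSpace.comap (fun ω => W t ω - W s ω) inferInstance) (F s) P
  gauss_incr : ∀ s t : ℝ, 0 ≤ s → s ≤ t →
    P.map (fun ω => W t ω - W s ω) = gaussianReal 0 (Real.toNNReal (t - s))

/-- The stochastic setting of the model: a filtered probability space carrying two
independent standard Brownian motions, together with the model parameters. -/
structure Setting (Ω : Type*) [mΩ : MeasurableSpace Ω] where
  P : Measure Ω
  isProb : IsProbabilityMeasure P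
  F : Filtration ℝ mΩ
  W1 : ℝ → Ω → ℝ
  W2 : ℝ → Ω → ℝ
  bm1 : IsStdBM P F W1
  bm2 : IsStdBM P F W2
  indepW : Indep (⨆ t : ℝ, MeasurableSpace.comap (W1 t) inferInstance)
      (⨆ t : ℝ, MeasurableSpace.comap (W2 t) inferInstance) P
  B : ℝ
  β₁ : ℝ
  β₂ : ℝ
  ρ : ℝ
  θ : ℝ
  σ : ℝ
  γ : ℝ
  R : ℝ
  hB : 0 ≤ B
  hβ₁ : 0 < β₁
  hβ₂ : 0 < β₂
  hρ₀ : 0 < ρ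
  hρ₁ : ρ < 1
  hθ : 0 < θ
  hσ : 1 < σ
  hγ₀ : 0 ≤ γ
  hγ₁ : γ < 1
  hR : 0 < R

variable {Ω : Type*} [mΩ : MeasurableSpace Ω]

/-- Pathwise-explicit solution of `dk_t = (B k_t - c_t) dt + β₁ k_t dW¹_t`, `k_0 = k₀`. -/
def kProc (S : Setting Ω) (k₀ : ℝ) (c : ℝ → Ω → ℝ) (t : ℝ) (ω : Ω) : ℝ :=
  Real.exp ((S.B - S.β₁ ^ 2 / 2) * t + S.β₁ * S.W1 t ω) *
    (k₀ - ∫ s in (0:ℝ)..t, c s ω * Real.exp (-((S.B - S.β₁ ^ 2 / 2) * s) - S.β₁ * S.W1 s ω))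

/-- Pathwise-explicit solution of `dh_t = ρ (c_t - h_t) dt + β₂ h_t dW²_t`, `h_0 = h₀`. -/
def hProc (S : Setting Ω) (h₀ : ℝ) (c : ℝ → Ω → ℝ) (t : ℝ) (ω : Ω) : ℝ :=
  Real.exp ((-S.ρ - S.β₂ ^ 2 / 2) * t + S.β₂ * S.W2 t ω) *
    (h₀ + S.ρ * ∫ s in (0:ℝ)..t, c s ω * Real.exp ((S.ρ + S.β₂ ^ 2 / 2) * s - S.β₂ * S.W2 s ω))

/-- Admissibility of a control `c` for the initial condition `(k₀, h₀)`: progressively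
measurable, a.s. locally integrable trajectories, `c > 0` ℙ⊗dt-a.e., positive state
processes, and `c ≤ R·k` ℙ⊗dt-a.e. -/
structure IsAdmissible (S : Setting Ω) (k₀ h₀ : ℝ) (c : ℝ → Ω → ℝ) : Prop where
  prog : ProgMeasurable S.F c
  locInt : ∀ᵐ ω ∂S.P, ∀ t : ℝ, 0 ≤ t → IntervalIntegrable (fun s => c s ω) volume 0 t
  cpos : ∀ᵐ ω ∂S.P, ∀ᵐ t ∂(volume.restrict (Set.Ici (0:ℝ))), 0 < c t ω
  kpos : ∀ᵐ ω ∂S.P, ∀ t : ℝ, 0 ≤ t → 0 < kProc S k₀ c t ω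
  hpos : ∀ᵐ ω ∂S.P, ∀ t : ℝ, 0 ≤ t → 0 < hProc S h₀ c t ω
  cbdd : ∀ᵐ ω ∂S.P, ∀ᵐ t ∂(volume.restrict (Set.Ici (0:ℝ))), c t ω ≤ S.R * kProc S k₀ c t ω

/-- The (nonnegative) cost `-J(k₀,h₀;c) ∈ [0,∞]`; note that
`(1/(1-σ))·(c/h^γ)^(1-σ) = -(1/(σ-1))·(h^γ/c)^(σ-1)`. -/
def Jcost (S : Setting Ω) (k₀ h₀ : ℝ) (c : ℝ → Ω → ℝ) : ℝ≥0∞ :=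
  ∫⁻ ω, (∫⁻ t in Set.Ioi (0:ℝ),
    ENNReal.ofReal ((S.σ - 1)⁻¹ * ((hProc S h₀ c t ω) ^ S.γ / c t ω) ^ (S.σ - 1) *
      Real.exp (-S.θ * t))) ∂S.P

/-- The utility functional `J(k₀,h₀;c) ∈ [-∞,0]`. -/
def J (S : Setting Ω) (k₀ h₀ : ℝ) (c : ℝ → Ω → ℝ) : EReal := -(Jcost S k₀ h₀ c : EReal)

/-- The infimum of the costs `-J(k₀,h₀;c)` over admissible controls. -/
def Vcost (S : Setting Ω) (k₀ h₀ : ℝ) : ℝ≥0∞ :=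
  ⨅ c : {c : ℝ → Ω → ℝ // IsAdmissible S k₀ h₀ c}, Jcost S k₀ h₀ c.1

/-- The value function `V(k₀,h₀) = sup_{c ∈ 𝓐(k₀,h₀)} J(k₀,h₀;c) ∈ [-∞,0]`
(the supremum of `J = -Jcost` equals minus the infimum of the costs). -/
def V (S : Setting Ω) (k₀ h₀ : ℝ) : EReal := -(Vcost S k₀ h₀ : EReal)

/-- Assumption 1 on the model parameters (with `λ = max{2, 1/(γ(σ-1))}`; it forces `γ > 0`). -/
def Assumption1 (S : Setting Ω) : Prop :=
  S.B ≤ S.R ∧ 0 < S.γ ∧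
    (S.ρ + (S.β₂ ^ 2 - S.β₁ ^ 2) / 2 ≤ 0 →
      (S.σ - 1) * (-S.γ * S.ρ - (S.γ * S.β₂ ^ 2 - S.β₁ ^ 2) / 2 +
        max 2 (1 / (S.γ * (S.σ - 1))) * (S.σ - 1) * (S.β₁ ^ 2 + S.γ ^ 2 * S.β₂ ^ 2)) < S.θ) ∧
    (0 < S.ρ + (S.β₂ ^ 2 - S.β₁ ^ 2) / 2 →
      (S.σ - 1) * (S.β₁ ^ 2 * (1 - S.γ) / 2 +
        max 2 (1 / (S.γ * (S.σ - 1))) * (S.σ - 1) * (S.β₁ ^ 2 + S.γ ^ 2 * S.β₂ ^ 2)) < S.θ)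

/-!
Multiplying a control by `1 / l` with `l ≥ 1` keeps it admissible as long as initial capital shrinks
by at most the factor `l`, and it multiplies the habit level by at most `l` as long as initial habit
grows by at most that factor. Hence the logarithm of the optimal cost `Vcost` is Lipschitz in
logarithmic coordinates wherever it is finite, so that `V`, with values in `[-∞, 0]`, is continuous
on the open quadrant for all parameters.

Finiteness is witnessed by consumption at a constant proportional rate `r`. The habit level is then
an average of past consumption against a lognormal kernel, so Jensen's inequality bounds its `m`-th
power, `m = max 1 (γ (σ - 1))`, by integrals of products of lognormal variables. At `r = B` their
expectations grow at rates strictly below `θ` by Assumption 1; since `B` may vanish, one uses some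
`r > 0` close to `B` instead.
-/

lemma integral_mul_exp_nonneg {f : ℝ → ℝ} {t : ℝ} (ht : 0 ≤ t)
    (hf : ∀ᵐ s ∂volume.restrict (Ici 0), 0 ≤ f s) (g : ℝ → ℝ) :
    0 ≤ ∫ s in (0 : ℝ)..t, f s * Real.exp (g s) := by
  refine intervalIntegral.integral_nonneg_of_ae_restrict ht ?_
  filter_upwards [ae_restrict_of_ae_restrict_of_subset Icc_subset_Ici_self hf] with s hs
  exact mul_nonneg hs (Real.exp_pos _).le

lemma rpow_div_inv_mul_rpow_le {x y c l γ q : ℝ} (hx : 0 ≤ x) (hy : 0 ≤ y) (hc : 0 < c)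
    (hl : 0 < l) (hγ : 0 ≤ γ) (hq : 0 ≤ q) (hxy : x ≤ l * y) :
    (x ^ γ / (l⁻¹ * c)) ^ q ≤ l ^ ((1 + γ) * q) * (y ^ γ / c) ^ q := by
  calc (x ^ γ / (l⁻¹ * c)) ^ q ≤ ((l * y) ^ γ / (l⁻¹ * c)) ^ q := by gcongr
    _ = (l ^ (1 + γ) * (y ^ γ / c)) ^ q := by
      rw [Real.mul_rpow hl.le hy, Real.rpow_add hl, Real.rpow_one]
      congr 1
      field_simp
    _ = l ^ ((1 + γ) * q) * (y ^ γ / c) ^ q := by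
      rw [Real.mul_rpow (by positivity) (by positivity), ← Real.rpow_mul hl.le]

lemma le_exp_dist_log_mul {x y : ℝ} (hx : 0 < x) (hy : 0 < y) :
    x ≤ Real.exp (dist (Real.log x) (Real.log y)) * y := by
  calc x = Real.exp (Real.log x - Real.log y) * y := by
        rw [Real.exp_sub, Real.exp_log hx, Real.exp_log hy, div_mul_cancel₀ _ hy.ne']
    _ ≤ _ := by
        gcongr
        exact le_abs_self _

lemma tendsto_of_le_mul_of_le_mul {ι : Type*} {u : Filter ι} {f M : ι → ℝ≥0∞} {y : ℝ≥0∞}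
    (hM : Filter.Tendsto M u (nhds 1)) (hle : ∀ᶠ x in u, f x ≤ M x * y)
    (hge : ∀ᶠ x in u, y ≤ M x * f x) : Filter.Tendsto f u (nhds y) := by
  have upper : Filter.Tendsto (fun x => M x * y) u (nhds y) := by
    simpa using ENNReal.Tendsto.mul_const hM (Or.inl one_ne_zero)
  have lower : Filter.Tendsto (fun x => (M x)⁻¹ * y) u (nhds y) := by
    simpa using ENNReal.Tendsto.mul_const hM.inv (Or.inl (by simp))
  refine tendsto_of_tendsto_of_tendsto_of_le_of_le' lower upper ?_ hle
  filter_upwards [hge, hM.eventually_ne one_ne_zero, hM.eventually_ne ENNReal.one_ne_top]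
    with x hx h₀ htop
  exact (ENNReal.inv_mul_le_iff h₀ htop).2 hx

lemma rpow_le_one_add_rpow {x a b : ℝ} (hx : 0 ≤ x) (ha : 0 ≤ a) (hab : a ≤ b) :
    x ^ a ≤ 1 + x ^ b := by
  rcases le_total x 1 with hx₁ | hx₁
  · exact (Real.rpow_le_one hx hx₁ ha).trans (le_add_of_nonneg_right (Real.rpow_nonneg hx b))
  · exact (Real.rpow_le_rpow_of_exponent_le hx₁ hab).trans (le_add_of_nonneg_left zero_le_one)

lemma div_rpow_le_add_mul_rpow {x c γ q m : ℝ} (hx : 0 ≤ x) (hc : 0 < c) (hγq : 0 ≤ γ * q)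
    (hm : γ * q ≤ m) : (x ^ γ / c) ^ q ≤ c ^ (-q) + c ^ (-q) * x ^ m := by
  calc (x ^ γ / c) ^ q = c ^ (-q) * x ^ (γ * q) := by
        rw [Real.div_rpow (Real.rpow_nonneg hx γ) hc.le, ← Real.rpow_mul hx, Real.rpow_neg hc.le,
          div_eq_inv_mul]
    _ ≤ c ^ (-q) * (1 + x ^ m) := by
        gcongr
        exact rpow_le_one_add_rpow hx hγq hm
    _ = _ := by ring

lemma lintegral_Ioi_add_mul_rpow_mul_exp_neg_lt_top {m δ : ℝ} (hm : 0 ≤ m) (hδ : 0 < δ)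
    (a b : ℝ) :
    ∫⁻ t in Ioi (0 : ℝ), ENNReal.ofReal ((a + b * t ^ m) * Real.exp (-δ * t)) < ⊤ := by
  have hexp := integrableOn_rpow_mul_exp_neg_mul_rpow (s := 0) neg_one_lt_zero one_pos hδ
  have hpow := integrableOn_rpow_mul_exp_neg_mul_rpow (neg_one_lt_zero.trans_le hm) one_pos hδ
  refine Integrable.lintegral_lt_top
    (((hexp.const_mul a).add (hpow.const_mul b)).congr (ae_of_all _ fun t => ?_))
  simp only [Pi.add_apply, Real.rpow_zero, Real.rpow_one]
  ring

lemma lintegral_rpow_le_measure_univ_rpow_mul {α : Type*} {m : MeasurableSpace α} {μ : Measure α}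
    {f : α → ℝ≥0∞} (hf : AEMeasurable f μ) {p : ℝ} (hp : 1 ≤ p) :
    (∫⁻ x, f x ∂μ) ^ p ≤ μ univ ^ (p - 1) * ∫⁻ x, f x ^ p ∂μ := by
  have hp₀ : 0 < p := one_pos.trans_le hp
  have hmono : ∫⁻ x, f x ∂μ ≤ (∫⁻ x, f x ^ p ∂μ) ^ p⁻¹ * μ univ ^ (1 - p⁻¹) := by
    simpa [eLpNorm'] using
      eLpNorm'_le_eLpNorm'_mul_rpow_measure_univ one_pos hp hf.aestronglyMeasurable
  calc (∫⁻ x, f x ∂μ) ^ p ≤ ((∫⁻ x, f x ^ p ∂μ) ^ p⁻¹ * μ univ ^ (1 - p⁻¹)) ^ p := by gcongr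
    _ = μ univ ^ (p - 1) * ∫⁻ x, f x ^ p ∂μ := by
      rw [ENNReal.mul_rpow_of_nonneg _ _ hp₀.le, ENNReal.rpow_inv_rpow hp₀.ne',
        ← ENNReal.rpow_mul, sub_mul, one_mul, inv_mul_cancel₀ hp₀.ne', mul_comm]

lemma ofReal_intervalIntegral_rpow_le {f : ℝ → ℝ} (hf : Continuous f) (hf₀ : ∀ s, 0 ≤ f s)
    {t p : ℝ} (ht : 0 ≤ t) (hp : 1 ≤ p) :
    ENNReal.ofReal ((∫ s in (0 : ℝ)..t, f s) ^ p) ≤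
      ENNReal.ofReal (t ^ (p - 1)) * ∫⁻ s in Ioc 0 t, ENNReal.ofReal (f s ^ p) := by
  have hp₀ : 0 ≤ p := zero_le_one.trans hp
  have hI : ENNReal.ofReal (∫ s in (0 : ℝ)..t, f s) = ∫⁻ s in Ioc 0 t, ENNReal.ofReal (f s) := by
    rw [intervalIntegral.integral_of_le ht,
      ofReal_integral_eq_lintegral_ofReal (hf.intervalIntegrable 0 t).1 (ae_of_all _ hf₀)]
  have hJensen := lintegral_rpow_le_measure_univ_rpow_mul
    (μ := volume.restrict (Ioc 0 t)) hf.measurable.ennreal_ofReal.aemeasurable hp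
  simpa only [← hI, Measure.restrict_apply_univ, Real.volume_Ioc, sub_zero,
    ENNReal.ofReal_rpow_of_nonneg (intervalIntegral.integral_nonneg ht fun s _ => hf₀ s) hp₀,
    ENNReal.ofReal_rpow_of_nonneg ht (sub_nonneg.2 hp),
    ENNReal.ofReal_rpow_of_nonneg (hf₀ _) hp₀] using hJensen

lemma lintegral_exp_mul_of_map_eq_gaussianReal {α : Type*} {m : MeasurableSpace α} {P : Measure α}
    {X : α → ℝ} {μ : ℝ} {v : ℝ≥0} (hX : P.map X = gaussianReal μ v) (y : ℝ) :
    ∫⁻ ω, ENNReal.ofReal (Real.exp (y * X ω)) ∂P =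
      ENNReal.ofReal (Real.exp (μ * y + v * y ^ 2 / 2)) := by
  have hXm : AEMeasurable X P := aemeasurable_of_map_neZero (by rw [hX]; infer_instance)
  have hint : Integrable (fun ω => Real.exp (y * X ω)) P := by
    have hgauss := integrable_exp_mul_gaussianReal (μ := μ) (v := v) y
    rw [← hX] at hgauss
    exact hgauss.comp_aemeasurable hXm
  rw [← ofReal_integral_eq_lintegral_ofReal hint (ae_of_all _ fun _ => (Real.exp_pos _).le),
    ← mgf_gaussianReal hX y, mgf]

lemma lintegral_exp_add_of_indepFun {α : Type*} {m : MeasurableSpace α} {P : Measure α}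
    {X Y : α → ℝ} (hX : Measurable X) (hY : Measurable Y) (hXY : X ⟂ᵢ[P] Y) :
    ∫⁻ ω, ENNReal.ofReal (Real.exp (X ω + Y ω)) ∂P =
      (∫⁻ ω, ENNReal.ofReal (Real.exp (X ω)) ∂P) * ∫⁻ ω, ENNReal.ofReal (Real.exp (Y ω)) ∂P := by
  have hexp : Measurable fun x : ℝ => ENNReal.ofReal (Real.exp x) := by fun_prop
  simp only [Real.exp_add, ENNReal.ofReal_mul (Real.exp_pos _).le]
  exact lintegral_mul_eq_lintegral_mul_lintegral_of_indepFun (hexp.comp hX) (hexp.comp hY)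
    (hXY.comp hexp hexp)

section Scaling

variable {S : Setting Ω} {k k' h h' a l t : ℝ} {c : ℝ → Ω → ℝ} {ω : Ω}

lemma kProc_const_mul : kProc S (a * k) (fun s ω => a * c s ω) t ω = a * kProc S k c t ω := by
  simp only [kProc, mul_assoc a, intervalIntegral.integral_const_mul]
  ring

lemma kProc_mono (hk : k ≤ k') : kProc S k c t ω ≤ kProc S k' c t ω := by
  unfold kProc
  gcongr

lemma hProc_pos (hh : 0 < h) (ht : 0 ≤ t) (hc : ∀ᵐ s ∂volume.restrict (Ici 0), 0 ≤ c s ω) :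
    0 < hProc S h c t ω :=
  mul_pos (Real.exp_pos _) <|
    add_pos_of_pos_of_nonneg hh (mul_nonneg S.hρ₀.le (integral_mul_exp_nonneg ht hc _))

lemma hProc_const_mul_le (ht : 0 ≤ t) (hc : ∀ᵐ s ∂volume.restrict (Ici 0), 0 ≤ c s ω)
    (hal : a ≤ l) (hh : h' ≤ l * h) :
    hProc S h' (fun s ω => a * c s ω) t ω ≤ l * hProc S h c t ω := by
  have hρ := S.hρ₀
  have hI := integral_mul_exp_nonneg ht hc fun s => (S.ρ + S.β₂ ^ 2 / 2) * s - S.β₂ * S.W2 s ω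
  simp only [hProc, mul_assoc a, intervalIntegral.integral_const_mul]
  rw [mul_left_comm l, mul_add l, mul_left_comm l S.ρ]
  gcongr

lemma IsAdmissible.const_mul (hc : IsAdmissible S k h c) (ha : 0 < a) (hk : a * k ≤ k')
    (hh' : 0 < h') : IsAdmissible S k' h' (fun s ω => a * c s ω) := by
  have hkProc (t : ℝ) (ω : Ω) :
      a * kProc S k c t ω ≤ kProc S k' (fun s ω => a * c s ω) t ω :=
    kProc_const_mul.symm.trans_le (kProc_mono hk)
  refine ⟨fun t => (hc.prog t).const_mul a, ?_, ?_, ?_, ?_, ?_⟩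
  · filter_upwards [hc.locInt] with ω hω t ht using (hω t ht).const_mul a
  · filter_upwards [hc.cpos] with ω hω
    filter_upwards [hω] with t ht using mul_pos ha ht
  · filter_upwards [hc.kpos] with ω hω t ht using (mul_pos ha (hω t ht)).trans_le (hkProc t ω)
  · filter_upwards [hc.cpos] with ω hω t ht
    exact hProc_pos hh' ht (hω.mono fun s hs => (mul_pos ha hs).le)
  · filter_upwards [hc.cbdd] with ω hω
    filter_upwards [hω] with t ht
    calc a * c t ω ≤ a * (S.R * kProc S k c t ω) := by gcongr
      _ = S.R * (a * kProc S k c t ω) := mul_left_comm ..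
      _ ≤ _ := mul_le_mul_of_nonneg_left (hkProc t ω) S.hR.le

lemma Jcost_inv_mul_le (hc : IsAdmissible S k h c) (hl : 1 ≤ l) (hh' : 0 < h') (hh : h' ≤ l * h) :
    Jcost S k' h' (fun s ω => l⁻¹ * c s ω) ≤
      ENNReal.ofReal (l ^ ((1 + S.γ) * (S.σ - 1))) * Jcost S k h c := by
  have hl₀ : 0 < l := one_pos.trans_le hl
  have hσ : 0 ≤ S.σ - 1 := sub_nonneg.2 S.hσ.le
  simp only [Jcost, ← lintegral_const_mul' _ _ ENNReal.ofReal_ne_top]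
  refine lintegral_mono_ae ?_
  filter_upwards [hc.cpos] with ω hω
  have hω₀ : ∀ᵐ s ∂volume.restrict (Ici 0), 0 ≤ c s ω := hω.mono fun _ => le_of_lt
  have hω' : ∀ᵐ s ∂volume.restrict (Ici 0), 0 ≤ l⁻¹ * c s ω :=
    hω₀.mono fun _ => mul_nonneg (inv_pos.2 hl₀).le
  refine lintegral_mono_ae ?_
  filter_upwards [ae_restrict_of_ae_restrict_of_subset Ioi_subset_Ici_self hω,
    ae_restrict_mem measurableSet_Ioi] with t hct (ht : 0 < t)
  rw [← ENNReal.ofReal_mul (by positivity)]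
  refine ENNReal.ofReal_le_ofReal ?_
  have hbound := rpow_div_inv_mul_rpow_le (hProc_pos hh' ht.le hω').le
    (hProc_pos (pos_of_mul_pos_right (hh'.trans_le hh) hl₀.le) ht.le hω₀).le hct hl₀ S.hγ₀ hσ
    (hProc_const_mul_le (S := S) ht.le hω₀ ((inv_le_one_of_one_le₀ hl).trans hl) hh)
  calc _ ≤ (S.σ - 1)⁻¹ * (l ^ ((1 + S.γ) * (S.σ - 1)) *
        (hProc S h c t ω ^ S.γ / c t ω) ^ (S.σ - 1)) * Real.exp (-S.θ * t) := by gcongr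
    _ = _ := by ring

lemma Vcost_le_Jcost (hc : IsAdmissible S k h c) : Vcost S k h ≤ Jcost S k h c :=
  iInf_le (fun c : {c : ℝ → Ω → ℝ // IsAdmissible S k h c} => Jcost S k h c.1) ⟨c, hc⟩

lemma Vcost_le_rpow_mul (hl : 1 ≤ l) (hk : k ≤ l * k') (hh' : 0 < h') (hh : h' ≤ l * h) :
    Vcost S k' h' ≤ ENNReal.ofReal (l ^ ((1 + S.γ) * (S.σ - 1))) * Vcost S k h := by
  have hl₀ : 0 < l := one_pos.trans_le hl
  conv_rhs => rw [Vcost]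
  rw [ENNReal.mul_iInf_of_ne (ENNReal.ofReal_pos.2 (by positivity)).ne' ENNReal.ofReal_ne_top]
  refine le_iInf fun c => (Vcost_le_Jcost ?_).trans (Jcost_inv_mul_le c.2 hl hh' hh)
  exact c.2.const_mul (inv_pos.2 hl₀) ((inv_mul_le_iff₀ hl₀).2 hk) hh'

lemma Vcost_le_exp_dist_log_mul {z w : ℝ × ℝ} (hz : z ∈ Ioi (0 : ℝ) ×ˢ Ioi (0 : ℝ))
    (hw : w ∈ Ioi (0 : ℝ) ×ˢ Ioi (0 : ℝ)) :
    Vcost S z.1 z.2 ≤ ENNReal.ofReal (Real.exp (dist (z.map Real.log Real.log)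
      (w.map Real.log Real.log) * ((1 + S.γ) * (S.σ - 1)))) * Vcost S w.1 w.2 := by
  rw [Real.exp_mul]
  refine Vcost_le_rpow_mul (Real.one_le_exp dist_nonneg) ?_ hz.2 ?_
  · refine (le_exp_dist_log_mul hw.1 hz.1).trans ?_
    rw [dist_comm, Prod.dist_eq]
    gcongr
    exacts [(hz.1 : 0 < z.1).le, le_max_left _ _]
  · refine (le_exp_dist_log_mul hz.2 hw.2).trans ?_
    rw [Prod.dist_eq]
    gcongr
    exacts [(hw.2 : 0 < w.2).le, le_max_right _ _]

lemma continuousOn_Vcost (S : Setting Ω) :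
    ContinuousOn (fun z : ℝ × ℝ => Vcost S z.1 z.2) (Ioi (0 : ℝ) ×ˢ Ioi (0 : ℝ)) := by
  intro w hw
  set ψ : ℝ × ℝ → ℝ × ℝ := Prod.map Real.log Real.log
  set e : ℝ := (1 + S.γ) * (S.σ - 1)
  have hψ : ContinuousAt ψ w :=
    (Real.continuousAt_log hw.1.ne').prodMap (Real.continuousAt_log hw.2.ne')
  have hM : Filter.Tendsto (fun z => ENNReal.ofReal (Real.exp (dist (ψ z) (ψ w) * e)))
      (nhds w) (nhds 1) := by
    have hexp : ContinuousAt (fun z => Real.exp (dist (ψ z) (ψ w) * e)) w := by fun_prop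
    simpa using ENNReal.tendsto_ofReal hexp.tendsto
  refine tendsto_of_le_mul_of_le_mul (hM.mono_left nhdsWithin_le_nhds) ?_ ?_
  · filter_upwards [self_mem_nhdsWithin] with z hz using Vcost_le_exp_dist_log_mul hz hw
  · filter_upwards [self_mem_nhdsWithin] with z hz
    simpa only [dist_comm] using Vcost_le_exp_dist_log_mul hw hz

lemma continuousOn_V (S : Setting Ω) :
    ContinuousOn (fun z : ℝ × ℝ => V S z.1 z.2) (Ioi (0 : ℝ) ×ˢ Ioi (0 : ℝ)) :=
  (continuous_neg.comp continuous_coe_ennreal_ereal).comp_continuousOn (continuousOn_Vcost S)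

end Scaling

namespace IsStdBM

variable {P : Measure Ω} {F : Filtration ℝ mΩ} {W : ℝ → Ω → ℝ} {s t : ℝ}

lemma measurable (hW : IsStdBM P F W) (t : ℝ) : Measurable (W t) :=
  hW.adapted.measurable

lemma measurable_comp (hW : IsStdBM P F W) {α : Type*} [MeasurableSpace α] {τ : α → ℝ}
    {w : α → Ω} (hτ : Measurable τ) (hw : Measurable w) : Measurable fun a => W (τ a) (w a) :=
  (measurable_uncurry_of_continuous_of_measurable hW.cont hW.measurable).comp (hτ.prodMk hw)

lemma indepFun_incr (hW : IsStdBM P F W) (hs : 0 ≤ s) (hst : s ≤ t) :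
    W s ⟂ᵢ[P] (fun ω => W t ω - W s ω) :=
  (indep_of_indep_of_le_right (hW.indep_incr s t hs hst) (hW.adapted s).comap_le).symm

lemma lintegral_exp_mul_incr (hW : IsStdBM P F W) (hs : 0 ≤ s) (hst : s ≤ t) (y : ℝ) :
    ∫⁻ ω, ENNReal.ofReal (Real.exp (y * (W t ω - W s ω))) ∂P =
      ENNReal.ofReal (Real.exp ((t - s) * y ^ 2 / 2)) := by
  rw [lintegral_exp_mul_of_map_eq_gaussianReal (hW.gauss_incr s t hs hst),
    Real.coe_toNNReal _ (sub_nonneg.2 hst), zero_mul, zero_add]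

lemma lintegral_exp_mul_add_mul_incr (hW : IsStdBM P F W) (hs : 0 ≤ s) (hst : s ≤ t) (x y : ℝ) :
    ∫⁻ ω, ENNReal.ofReal (Real.exp (x * W s ω + y * (W t ω - W s ω))) ∂P =
      ENNReal.ofReal (Real.exp ((s * x ^ 2 + (t - s) * y ^ 2) / 2)) := by
  have hWs : ∫⁻ ω, ENNReal.ofReal (Real.exp (x * W s ω)) ∂P =
      ENNReal.ofReal (Real.exp (s * x ^ 2 / 2)) := by
    simpa [hW.init] using hW.lintegral_exp_mul_incr le_rfl hs x
  rw [lintegral_exp_add_of_indepFun (X := fun ω => x * W s ω) (Y := fun ω => y * (W t ω - W s ω))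
      ((hW.measurable s).const_mul x) (((hW.measurable t).sub (hW.measurable s)).const_mul y)
      ((hW.indepFun_incr hs hst).comp (measurable_const_mul x) (measurable_const_mul y)),
    hWs, hW.lintegral_exp_mul_incr hs hst, ← ENNReal.ofReal_mul (Real.exp_pos _).le,
    ← Real.exp_add, add_div]

end IsStdBM

namespace Setting

instance (S : Setting Ω) : IsProbabilityMeasure S.P := S.isProb

lemma lintegral_exp_brownian (S : Setting Ω) {s t : ℝ} (hs : 0 ≤ s) (hst : s ≤ t) (x y z : ℝ) :
    ∫⁻ ω, ENNReal.ofReal (Real.exp (x * S.W1 s ω + y * (S.W1 t ω - S.W1 s ω) +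
      z * (S.W2 t ω - S.W2 s ω))) ∂S.P =
      ENNReal.ofReal (Real.exp ((s * x ^ 2 + (t - s) * y ^ 2 + (t - s) * z ^ 2) / 2)) := by
  have hindep : IndepFun (fun ω u => S.W1 u ω) (fun ω u => S.W2 u ω) S.P := by
    simpa only [IndepFun_iff_Indep, MeasurableSpace.pi, MeasurableSpace.comap_iSup,
      MeasurableSpace.comap_comp, Function.comp_def] using S.indepW
  have hX : Measurable fun w : ℝ → ℝ => x * w s + y * (w t - w s) := by fun_prop
  have hY : Measurable fun w : ℝ → ℝ => z * (w t - w s) := by fun_prop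
  have h₁ := measurable_pi_lambda (fun ω u => S.W1 u ω) S.bm1.measurable
  have h₂ := measurable_pi_lambda (fun ω u => S.W2 u ω) S.bm2.measurable
  refine (lintegral_exp_add_of_indepFun (hX.comp h₁) (hY.comp h₂) (hindep.comp hX hY)).trans ?_
  simp only [Function.comp_apply]
  rw [S.bm1.lintegral_exp_mul_add_mul_incr hs hst, S.bm2.lintegral_exp_mul_incr hs hst,
    ← ENNReal.ofReal_mul (Real.exp_pos _).le, ← Real.exp_add, add_div _ ((t - s) * z ^ 2)]

end Setting

/-- The consumption process of the investor who consumes capital at the constant proportional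
rate `r`, that is `c_t = r k_t` (see `mul_kProc_proportionalControl`). -/
def proportionalControl (S : Setting Ω) (k r t : ℝ) (ω : Ω) : ℝ :=
  r * k * Real.exp ((S.B - r - S.β₁ ^ 2 / 2) * t + S.β₁ * S.W1 t ω)

/-- The weight with which consumption at time `s` enters the habit level at time `t`. -/
def habitKernel (S : Setting Ω) (s t : ℝ) (ω : Ω) : ℝ :=
  Real.exp ((-S.ρ - S.β₂ ^ 2 / 2) * (t - s) + S.β₂ * (S.W2 t ω - S.W2 s ω))

/-- The exponential growth rate of the `x`-th moment of `proportionalControl S k r`. -/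
def controlRate (S : Setting Ω) (r x : ℝ) : ℝ :=
  x * (S.B - r) + x * (x - 1) * S.β₁ ^ 2 / 2

/-- The exponential growth rate of the `x`-th moment of `habitKernel S s t` in `t - s`. -/
def habitRate (S : Setting Ω) (x : ℝ) : ℝ :=
  -x * S.ρ + x * (x - 1) * S.β₂ ^ 2 / 2

/-- The monomial `c_t ^ d * c_s ^ b * g_{s,t} ^ a` in the proportional consumption `c` and the habit
kernel `g`, valued in `[0, ∞]`. -/
def habitMonomial (S : Setting Ω) (k r d b a s t : ℝ) (ω : Ω) : ℝ≥0∞ :=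
  ENNReal.ofReal (proportionalControl S k r t ω ^ d *
    (proportionalControl S k r s ω ^ b * habitKernel S s t ω ^ a))

section ProportionalControl

variable {S : Setting Ω} {k h r s t : ℝ} {ω : Ω}

lemma proportionalControl_pos (hk : 0 < k) (hr : 0 < r) : 0 < proportionalControl S k r t ω := by
  unfold proportionalControl
  positivity

lemma continuous_proportionalControl :
    Continuous fun t => proportionalControl S k r t ω := by
  have hW := S.bm1.cont ω
  unfold proportionalControl
  fun_prop

lemma measurable_proportionalControl {α : Type*} [MeasurableSpace α] {τ : α → ℝ} {w : α → Ω}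
    (hτ : Measurable τ) (hw : Measurable w) :
    Measurable fun a => proportionalControl S k r (τ a) (w a) := by
  have hW := S.bm1.measurable_comp hτ hw
  unfold proportionalControl
  fun_prop

lemma isStronglyProgressive_proportionalControl :
    IsStronglyProgressive S.F (proportionalControl S k r) := by
  refine StronglyAdapted.isStronglyProgressive_of_continuous (fun t => ?_)
    fun ω => continuous_proportionalControl
  have hexp : Measurable fun x : ℝ =>
      r * k * Real.exp ((S.B - r - S.β₁ ^ 2 / 2) * t + S.β₁ * x) := by fun_prop
  exact (hexp.comp (S.bm1.adapted t)).stronglyMeasurable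

lemma mul_kProc_proportionalControl (hr : r ≠ 0) :
    r * kProc S k (proportionalControl S k r) t ω = proportionalControl S k r t ω := by
  have hdiscounted (s : ℝ) : proportionalControl S k r s ω *
      Real.exp (-((S.B - S.β₁ ^ 2 / 2) * s) - S.β₁ * S.W1 s ω) =
        r * k * Real.exp (-r * s) := by
    rw [proportionalControl, mul_assoc, ← Real.exp_add]
    ring_nf
  have hexp : Real.exp ((S.B - r - S.β₁ ^ 2 / 2) * t + S.β₁ * S.W1 t ω) =
      Real.exp ((S.B - S.β₁ ^ 2 / 2) * t + S.β₁ * S.W1 t ω) * Real.exp (-r * t) := by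
    rw [← Real.exp_add]
    ring_nf
  simp only [kProc, hdiscounted, intervalIntegral.integral_const_mul]
  rw [intervalIntegral.integral_comp_mul_left (fun x => Real.exp x) (neg_ne_zero.2 hr),
    integral_exp, proportionalControl, hexp, mul_zero, Real.exp_zero, smul_eq_mul]
  field_simp
  ring

lemma isAdmissible_proportionalControl (hk : 0 < k) (hh : 0 < h) (hr : 0 < r) (hrR : r ≤ S.R) :
    IsAdmissible S k h (proportionalControl S k r) := by
  have hkProc (t : ℝ) (ω : Ω) : 0 < kProc S k (proportionalControl S k r) t ω := by
    refine pos_of_mul_pos_right ?_ hr.le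
    rw [mul_kProc_proportionalControl hr.ne']
    exact proportionalControl_pos hk hr
  refine ⟨isStronglyProgressive_proportionalControl,
    ae_of_all _ fun ω t _ => continuous_proportionalControl.intervalIntegrable _ _,
    ae_of_all _ fun ω => ae_of_all _ fun t => proportionalControl_pos hk hr,
    ae_of_all _ fun ω t _ => hkProc t ω,
    ae_of_all _ fun ω t ht =>
      hProc_pos hh ht (ae_of_all _ fun s => (proportionalControl_pos hk hr).le),
    ae_of_all _ fun ω => ae_of_all _ fun t => ?_⟩
  rw [← mul_kProc_proportionalControl hr.ne']
  exact mul_le_mul_of_nonneg_right hrR (hkProc t ω).le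

end ProportionalControl

section HabitMoments

variable {S : Setting Ω} {k h r s t a b d m Λ : ℝ} {c : ℝ → Ω → ℝ} {ω : Ω}

lemma habitKernel_pos : 0 < habitKernel S s t ω :=
  Real.exp_pos _

lemma continuous_habitKernel_left : Continuous fun s => habitKernel S s t ω := by
  have hW := S.bm2.cont ω
  unfold habitKernel
  fun_prop

lemma measurable_habitKernel {α : Type*} [MeasurableSpace α] {τ : α → ℝ} {w : α → Ω}
    (hτ : Measurable τ) (hw : Measurable w) :
    Measurable fun a => habitKernel S (τ a) t (w a) := by
  have hW := S.bm2.measurable_comp hτ hw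
  have hWt := (S.bm2.measurable t).comp hw
  simp only [Function.comp_def] at hWt
  unfold habitKernel
  fun_prop

lemma hProc_eq_habitKernel :
    hProc S h c t ω = h * habitKernel S 0 t ω +
      S.ρ * ∫ s in (0 : ℝ)..t, c s ω * habitKernel S s t ω := by
  have hkernel (s : ℝ) : habitKernel S s t ω =
      Real.exp ((-S.ρ - S.β₂ ^ 2 / 2) * t + S.β₂ * S.W2 t ω) *
        Real.exp ((S.ρ + S.β₂ ^ 2 / 2) * s - S.β₂ * S.W2 s ω) := by
    rw [habitKernel, ← Real.exp_add]
    ring_nf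
  simp only [hProc, hkernel, mul_left_comm (c _ ω), intervalIntegral.integral_const_mul,
    S.bm2.init]
  rw [mul_zero, mul_zero, sub_zero, Real.exp_zero]
  ring

lemma measurable_hProc_proportionalControl :
    Measurable fun z : ℝ × Ω => hProc S h (proportionalControl S k r) z.1 z.2 := by
  refine measurable_uncurry_of_continuous_of_measurable
    (u := hProc S h (proportionalControl S k r)) (fun ω => ?_) fun t => ?_
  · have hW := S.bm2.cont ω
    have hc := continuous_proportionalControl (S := S) (k := k) (r := r) (ω := ω)
    unfold hProc
    fun_prop
  · have hfg : StronglyMeasurable fun z : Ω × ℝ =>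
        proportionalControl S k r z.2 z.1 * habitKernel S z.2 t z.1 :=
      ((measurable_proportionalControl measurable_snd measurable_fst).mul
        (measurable_habitKernel measurable_snd measurable_fst)).stronglyMeasurable
    have hI : Measurable fun ω =>
        ∫ s in (0 : ℝ)..t, proportionalControl S k r s ω * habitKernel S s t ω :=
      (hfg.integral_prod_right.sub hfg.integral_prod_right).measurable
    have hg : Measurable (habitKernel S 0 t) :=
      measurable_habitKernel measurable_const measurable_id
    have heq : hProc S h (proportionalControl S k r) t = fun ω => h * habitKernel S 0 t ω +
        S.ρ * ∫ s in (0 : ℝ)..t, proportionalControl S k r s ω * habitKernel S s t ω :=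
      funext fun ω => hProc_eq_habitKernel
    rw [heq]
    fun_prop

lemma ofReal_hProc_rpow_le (hh : 0 ≤ h) (ht : 0 ≤ t) (hm : 1 ≤ m) (hc : ∀ s, 0 ≤ c s ω)
    (hcont : Continuous fun s => c s ω) :
    ENNReal.ofReal (hProc S h c t ω ^ m) ≤ 2 ^ (m - 1) *
      (ENNReal.ofReal (h ^ m * habitKernel S 0 t ω ^ m) + ENNReal.ofReal (S.ρ ^ m * t ^ (m - 1)) *
        ∫⁻ s in Ioc 0 t, ENNReal.ofReal (c s ω ^ m * habitKernel S s t ω ^ m)) := by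
  have hρ := S.hρ₀.le
  have hm₀ : 0 ≤ m := zero_le_one.trans hm
  have hg (s : ℝ) : 0 ≤ habitKernel S s t ω := habitKernel_pos.le
  have hcg (s : ℝ) : 0 ≤ c s ω * habitKernel S s t ω := mul_nonneg (hc s) (hg s)
  set I := ∫ s in (0 : ℝ)..t, c s ω * habitKernel S s t ω
  have hI : 0 ≤ I := intervalIntegral.integral_nonneg ht fun s _ => hcg s
  have hIm := ofReal_intervalIntegral_rpow_le (hcont.fun_mul continuous_habitKernel_left) hcg ht hm
  calc ENNReal.ofReal (hProc S h c t ω ^ m)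
      = (ENNReal.ofReal (h * habitKernel S 0 t ω) + ENNReal.ofReal (S.ρ * I)) ^ m := by
        rw [hProc_eq_habitKernel, ← ENNReal.ofReal_add (mul_nonneg hh (hg 0)) (mul_nonneg hρ hI),
          ENNReal.ofReal_rpow_of_nonneg
            (add_nonneg (mul_nonneg hh (hg 0)) (mul_nonneg hρ hI)) hm₀]
    _ ≤ 2 ^ (m - 1) * (ENNReal.ofReal (h * habitKernel S 0 t ω) ^ m +
          ENNReal.ofReal (S.ρ * I) ^ m) := ENNReal.rpow_add_le_mul_rpow_add_rpow _ _ hm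
    _ = 2 ^ (m - 1) * (ENNReal.ofReal (h ^ m * habitKernel S 0 t ω ^ m) +
          ENNReal.ofReal (S.ρ ^ m) * ENNReal.ofReal (I ^ m)) := by
        rw [ENNReal.ofReal_rpow_of_nonneg (mul_nonneg hh (hg 0)) hm₀, Real.mul_rpow hh (hg 0),
          ENNReal.ofReal_rpow_of_nonneg (mul_nonneg hρ hI) hm₀, Real.mul_rpow hρ hI,
          ENNReal.ofReal_mul (p := S.ρ ^ m) (by positivity)]
    _ ≤ _ := by
        simp only [← Real.mul_rpow (hc _) (hg _)]
        rw [ENNReal.ofReal_mul (p := S.ρ ^ m) (by positivity), mul_assoc (ENNReal.ofReal (S.ρ ^ m))]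
        gcongr

lemma lintegral_habitMonomial (hk : 0 < k) (hr : 0 < r) (hs : 0 ≤ s) (hst : s ≤ t) :
    ∫⁻ ω, habitMonomial S k r d b a s t ω ∂S.P =
      ENNReal.ofReal ((r * k) ^ (d + b) * Real.exp (controlRate S r (d + b) * s +
        (controlRate S r d + habitRate S a) * (t - s))) := by
  have hrk : 0 < r * k := mul_pos hr hk
  set C := (d + b) * (S.B - r - S.β₁ ^ 2 / 2) * s +
    (d * (S.B - r - S.β₁ ^ 2 / 2) + a * (-S.ρ - S.β₂ ^ 2 / 2)) * (t - s) with hC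
  have hfactor (ω : Ω) : proportionalControl S k r t ω ^ d *
      (proportionalControl S k r s ω ^ b * habitKernel S s t ω ^ a) =
        (r * k) ^ (d + b) * Real.exp C * Real.exp ((d + b) * S.β₁ * S.W1 s ω +
          d * S.β₁ * (S.W1 t ω - S.W1 s ω) + a * S.β₂ * (S.W2 t ω - S.W2 s ω)) := by
    simp only [proportionalControl, habitKernel, Real.mul_rpow hrk.le (Real.exp_pos _).le,
      ← Real.exp_mul, Real.rpow_add hrk]
    rw [mul_assoc (_ ^ b), mul_mul_mul_comm, ← Real.exp_add, ← Real.exp_add,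
      mul_assoc (_ * _ ^ b), ← Real.exp_add, hC]
    ring_nf
  have hpos : 0 ≤ (r * k) ^ (d + b) * Real.exp C := by positivity
  simp only [habitMonomial, hfactor, ENNReal.ofReal_mul hpos]
  rw [lintegral_const_mul' _ _ ENNReal.ofReal_ne_top, S.lintegral_exp_brownian hs hst,
    ← ENNReal.ofReal_mul hpos, mul_assoc, ← Real.exp_add, hC, controlRate, controlRate, habitRate]
  ring_nf

lemma lintegral_habitMonomial_le (hk : 0 < k) (hr : 0 < r) (hs : 0 ≤ s) (hst : s ≤ t)
    (hc : controlRate S r (d + b) ≤ Λ) (hg : controlRate S r d + habitRate S a ≤ Λ) :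
    ∫⁻ ω, habitMonomial S k r d b a s t ω ∂S.P ≤
      ENNReal.ofReal ((r * k) ^ (d + b) * Real.exp (Λ * t)) := by
  have hts : 0 ≤ t - s := sub_nonneg.2 hst
  have hexp := add_le_add (mul_le_mul_of_nonneg_right hc hs) (mul_le_mul_of_nonneg_right hg hts)
  rw [← mul_add, add_sub_cancel] at hexp
  rw [lintegral_habitMonomial hk hr hs hst]
  gcongr

lemma measurable_habitMonomial {α : Type*} [MeasurableSpace α] {τ : α → ℝ} {w : α → Ω}
    (hτ : Measurable τ) (hw : Measurable w) :
    Measurable fun x => habitMonomial S k r d b a (τ x) t (w x) := by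
  have hct : Measurable fun x => proportionalControl S k r t (w x) :=
    measurable_proportionalControl measurable_const hw
  have hcs : Measurable fun x => proportionalControl S k r (τ x) (w x) :=
    measurable_proportionalControl hτ hw
  have hg : Measurable fun x => habitKernel S (τ x) t (w x) := measurable_habitKernel hτ hw
  unfold habitMonomial
  fun_prop

lemma ofReal_rpow_mul_hProc_rpow_le (hk : 0 < k) (hh : 0 ≤ h) (hr : 0 < r) (ht : 0 ≤ t)
    (hm : 1 ≤ m) :
    ENNReal.ofReal (proportionalControl S k r t ω ^ d *
      hProc S h (proportionalControl S k r) t ω ^ m) ≤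
      2 ^ (m - 1) * (ENNReal.ofReal (h ^ m) * habitMonomial S k r d 0 m 0 t ω +
      ENNReal.ofReal (S.ρ ^ m * t ^ (m - 1)) *
        ∫⁻ s in Ioc 0 t, habitMonomial S k r d m m s t ω) := by
  have hc (s : ℝ) : 0 < proportionalControl S k r s ω := proportionalControl_pos hk hr
  have hcd : 0 ≤ proportionalControl S k r t ω ^ d := Real.rpow_nonneg (hc t).le _
  have hbound := ofReal_hProc_rpow_le (S := S) hh ht hm (fun s => (hc s).le)
    continuous_proportionalControl
  simp only [habitMonomial, ENNReal.ofReal_mul hcd]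
  refine (mul_le_mul_right hbound _).trans_eq ?_
  rw [lintegral_const_mul' _ _ ENNReal.ofReal_ne_top, Real.rpow_zero, one_mul,
    ENNReal.ofReal_mul (p := h ^ m) (by positivity)]
  ring

lemma lintegral_rpow_mul_hProc_rpow_le (hk : 0 < k) (hh : 0 ≤ h) (hr : 0 < r) (ht : 0 < t)
    (hm : 1 ≤ m) (hc : controlRate S r d ≤ Λ) (hcm : controlRate S r (d + m) ≤ Λ)
    (hg : controlRate S r d + habitRate S m ≤ Λ) :
    ∫⁻ ω, ENNReal.ofReal (proportionalControl S k r t ω ^ d *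
      hProc S h (proportionalControl S k r) t ω ^ m) ∂S.P ≤
      2 ^ (m - 1) * ENNReal.ofReal ((h ^ m * (r * k) ^ d + S.ρ ^ m * (r * k) ^ (d + m) * t ^ m) *
        Real.exp (Λ * t)) := by
  have hρ := S.hρ₀
  refine (lintegral_mono fun ω => ofReal_rpow_mul_hProc_rpow_le hk hh hr ht.le hm).trans ?_
  rw [lintegral_const_mul' _ _ (by finiteness)]
  gcongr
  have hmeas : Measurable (habitMonomial S k r d 0 m 0 t) :=
    measurable_habitMonomial measurable_const measurable_id
  rw [lintegral_add_left (hmeas.const_mul _), lintegral_const_mul' _ _ ENNReal.ofReal_ne_top,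
    lintegral_const_mul' _ _ ENNReal.ofReal_ne_top,
    lintegral_lintegral_swap (measurable_habitMonomial measurable_snd measurable_fst).aemeasurable]
  calc _ ≤ ENNReal.ofReal (h ^ m) * ENNReal.ofReal ((r * k) ^ (d + 0) * Real.exp (Λ * t)) +
        ENNReal.ofReal (S.ρ ^ m * t ^ (m - 1)) *
          ∫⁻ _ in Ioc 0 t, ENNReal.ofReal ((r * k) ^ (d + m) * Real.exp (Λ * t)) := by
        gcongr _ * ?_ + _ * ?_
        · exact lintegral_habitMonomial_le hk hr le_rfl ht.le (by rwa [add_zero]) hg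
        · exact setLIntegral_mono' measurableSet_Ioc fun s hs =>
            lintegral_habitMonomial_le hk hr hs.1.le hs.2 hcm hg
    _ = _ := by
        rw [setLIntegral_const, Real.volume_Ioc, sub_zero, add_zero, Real.rpow_sub_one ht.ne']
        repeat rw [← ENNReal.ofReal_mul (by positivity)]
        rw [← ENNReal.ofReal_add (by positivity) (by positivity)]
        congr 1
        field_simp

lemma lintegral_proportionalControl_rpow_le (hk : 0 < k) (hr : 0 < r) (ht : 0 ≤ t)
    (hc : controlRate S r d ≤ Λ) :
    ∫⁻ ω, ENNReal.ofReal (proportionalControl S k r t ω ^ d) ∂S.P ≤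
      ENNReal.ofReal ((r * k) ^ d * Real.exp (Λ * t)) := by
  simpa [habitMonomial] using lintegral_habitMonomial_le (a := 0) (b := 0) hk hr ht le_rfl
    (by rwa [add_zero]) (by simpa [habitRate] using hc)

lemma ofReal_cost_le {x y : ℝ} (hx : 0 < x) (hy : 0 ≤ y) (hγm : S.γ * (S.σ - 1) ≤ m) :
    ENNReal.ofReal ((S.σ - 1)⁻¹ * (y ^ S.γ / x) ^ (S.σ - 1) * Real.exp (-S.θ * t)) ≤
      ENNReal.ofReal ((S.σ - 1)⁻¹ * Real.exp (-S.θ * t)) *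
        (ENNReal.ofReal (x ^ (1 - S.σ)) + ENNReal.ofReal (x ^ (1 - S.σ) * y ^ m)) := by
  have hσ : 0 < S.σ - 1 := sub_pos.2 S.hσ
  have hbound := div_rpow_le_add_mul_rpow hy hx (mul_nonneg S.hγ₀ hσ.le) hγm
  rw [neg_sub] at hbound
  rw [← ENNReal.ofReal_add (by positivity) (by positivity), ← ENNReal.ofReal_mul (by positivity),
    mul_right_comm]
  gcongr

lemma lintegral_cost_proportionalControl_le (hk : 0 < k) (hh : 0 < h) (hr : 0 < r) (ht : 0 < t)
    (hm : 1 ≤ m) (hγm : S.γ * (S.σ - 1) ≤ m) (hc : controlRate S r (1 - S.σ) ≤ Λ)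
    (hcm : controlRate S r (1 - S.σ + m) ≤ Λ)
    (hg : controlRate S r (1 - S.σ) + habitRate S m ≤ Λ) :
    ∫⁻ ω, ENNReal.ofReal ((S.σ - 1)⁻¹ * (hProc S h (proportionalControl S k r) t ω ^ S.γ /
      proportionalControl S k r t ω) ^ (S.σ - 1) * Real.exp (-S.θ * t)) ∂S.P ≤
      ENNReal.ofReal (S.σ - 1)⁻¹ *
        (ENNReal.ofReal ((r * k) ^ (1 - S.σ) * Real.exp (-(S.θ - Λ) * t)) +
          2 ^ (m - 1) * ENNReal.ofReal ((h ^ m * (r * k) ^ (1 - S.σ) +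
            S.ρ ^ m * (r * k) ^ (1 - S.σ + m) * t ^ m) * Real.exp (-(S.θ - Λ) * t))) := by
  have hexp : Real.exp (-(S.θ - Λ) * t) = Real.exp (-S.θ * t) * Real.exp (Λ * t) := by
    rw [← Real.exp_add]
    ring_nf
  have hmeas : Measurable fun ω => proportionalControl S k r t ω :=
    measurable_proportionalControl measurable_const measurable_id
  calc _ ≤ ∫⁻ ω, ENNReal.ofReal ((S.σ - 1)⁻¹ * Real.exp (-S.θ * t)) *
        (ENNReal.ofReal (proportionalControl S k r t ω ^ (1 - S.σ)) +
          ENNReal.ofReal (proportionalControl S k r t ω ^ (1 - S.σ) *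
            hProc S h (proportionalControl S k r) t ω ^ m)) ∂S.P :=
        lintegral_mono fun ω => ofReal_cost_le (proportionalControl_pos hk hr)
          (hProc_pos hh ht.le (ae_of_all _ fun s => (proportionalControl_pos hk hr).le)).le hγm
    _ ≤ ENNReal.ofReal ((S.σ - 1)⁻¹ * Real.exp (-S.θ * t)) *
        (ENNReal.ofReal ((r * k) ^ (1 - S.σ) * Real.exp (Λ * t)) +
          2 ^ (m - 1) * ENNReal.ofReal ((h ^ m * (r * k) ^ (1 - S.σ) +
            S.ρ ^ m * (r * k) ^ (1 - S.σ + m) * t ^ m) * Real.exp (Λ * t))) := by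
        rw [lintegral_const_mul' _ _ ENNReal.ofReal_ne_top, lintegral_add_left (by fun_prop)]
        gcongr
        · exact lintegral_proportionalControl_rpow_le hk hr ht.le hc
        · exact lintegral_rpow_mul_hProc_rpow_le hk hh.le hr ht hm hc hcm hg
    _ = _ := by
        simp only [hexp, ← mul_assoc, ENNReal.ofReal_mul' (Real.exp_pos _).le]
        ring

lemma Jcost_proportionalControl_lt_top (hk : 0 < k) (hh : 0 < h) (hr : 0 < r) (hm : 1 ≤ m)
    (hγm : S.γ * (S.σ - 1) ≤ m) (hc : controlRate S r (1 - S.σ) < S.θ)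
    (hcm : controlRate S r (1 - S.σ + m) < S.θ)
    (hg : controlRate S r (1 - S.σ) + habitRate S m < S.θ) :
    Jcost S k h (proportionalControl S k r) < ⊤ := by
  obtain ⟨Λ, hΛ, hΛθ⟩ := exists_between (max_lt hc (max_lt hcm hg))
  obtain ⟨hcΛ, hcmΛ, hgΛ⟩ : _ ∧ _ ∧ _ := by simpa only [max_lt_iff] using hΛ
  have hmeas : Measurable fun z : Ω × ℝ =>
      ENNReal.ofReal ((S.σ - 1)⁻¹ * (hProc S h (proportionalControl S k r) z.2 z.1 ^ S.γ /
        proportionalControl S k r z.2 z.1) ^ (S.σ - 1) * Real.exp (-S.θ * z.2)) := by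
    have hcm : Measurable fun z : Ω × ℝ => proportionalControl S k r z.2 z.1 :=
      measurable_proportionalControl measurable_snd measurable_fst
    have hHm : Measurable fun z : Ω × ℝ => hProc S h (proportionalControl S k r) z.2 z.1 :=
      measurable_hProc_proportionalControl.comp measurable_swap
    fun_prop
  rw [Jcost, lintegral_lintegral_swap hmeas.aemeasurable]
  refine (setLIntegral_mono' measurableSet_Ioi fun t ht =>
    lintegral_cost_proportionalControl_le hk hh hr ht hm hγm hcΛ.le hcmΛ.le hgΛ.le).trans_lt ?_
  have hδ : 0 < S.θ - Λ := sub_pos.2 hΛθ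
  rw [lintegral_const_mul _ (by fun_prop), lintegral_add_left (by fun_prop),
    lintegral_const_mul _ (by fun_prop)]
  refine ENNReal.mul_lt_top ENNReal.ofReal_lt_top (ENNReal.add_lt_top.2 ⟨?_,
    ENNReal.mul_lt_top (by finiteness) ?_⟩)
  · simpa only [zero_mul, add_zero] using
      lintegral_Ioi_add_mul_rpow_mul_exp_neg_lt_top le_rfl hδ _ 0
  · exact lintegral_Ioi_add_mul_rpow_mul_exp_neg_lt_top (zero_le_one.trans hm) hδ _ _

end HabitMoments

namespace Assumption1

variable {S : Setting Ω}

lemma mul_add_lt (hA : Assumption1 S) :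
    (S.σ - 1) * (S.β₁ ^ 2 * (1 - S.γ) / 2 + max 2 (1 / (S.γ * (S.σ - 1))) * (S.σ - 1) *
      (S.β₁ ^ 2 + S.γ ^ 2 * S.β₂ ^ 2)) < S.θ := by
  obtain ⟨-, hγ, hneg, hpos⟩ := hA
  rcases le_or_gt (S.ρ + (S.β₂ ^ 2 - S.β₁ ^ 2) / 2) 0 with hle | hgt
  · refine (mul_le_mul_of_nonneg_left ?_ (sub_pos.2 S.hσ).le).trans_lt (hneg hle)
    linarith [mul_nonpos_of_nonneg_of_nonpos hγ.le hle]
  · exact hpos hgt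

lemma mul_sq_add_mul_sq_lt (hA : Assumption1 S) {m : ℝ} (hm : m = max 1 (S.γ * (S.σ - 1))) :
    (S.σ - 1) * S.σ * S.β₁ ^ 2 / 2 + m * (m - 1) * S.β₂ ^ 2 / 2 < S.θ := by
  have hγ : 0 < S.γ := hA.2.1
  have hγ₁ := S.hγ₁
  refine lt_of_le_of_lt ?_ hA.mul_add_lt
  set q := S.σ - 1
  have hq₀ : 0 < q := sub_pos.2 S.hσ
  set lam := max 2 (1 / (S.γ * q))
  have hlam : 2 ≤ lam := le_max_left _ _
  have hlamq : 1 ≤ lam * (S.γ * q) := (div_le_iff₀ (by positivity)).1 (le_max_right _ _)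
  have hcapital : q * S.σ / 2 ≤ q * ((1 - S.γ) / 2 + lam * q) := by
    rw [mul_div_assoc]
    gcongr
    nlinarith
  have hhabit : m * (m - 1) / 2 ≤ lam * (S.γ * q) ^ 2 := by
    rcases max_cases 1 (S.γ * q) with ⟨hmax, -⟩ | ⟨hmax, -⟩ <;> rw [hm, hmax]
    · rw [sub_self, mul_zero, zero_div]
      positivity
    · nlinarith
  calc _ = q * S.σ / 2 * S.β₁ ^ 2 + m * (m - 1) / 2 * S.β₂ ^ 2 := by ring
    _ ≤ q * ((1 - S.γ) / 2 + lam * q) * S.β₁ ^ 2 + lam * (S.γ * q) ^ 2 * S.β₂ ^ 2 := by gcongr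
    _ = _ := by ring

lemma moment_rates_lt (hA : Assumption1 S) {m : ℝ} (hm : m = max 1 (S.γ * (S.σ - 1))) :
    controlRate S S.B (1 - S.σ) < S.θ ∧ controlRate S S.B (1 - S.σ + m) < S.θ ∧
      controlRate S S.B (1 - S.σ) + habitRate S m < S.θ := by
  have hσ := S.hσ
  have hm₁ : 1 ≤ m := hm ▸ le_max_left _ _
  have hmσ : m ≤ S.σ := hm ▸ max_le hσ.le (by nlinarith [S.hγ₀, S.hγ₁])
  have hm₀ : 0 ≤ m := zero_le_one.trans hm₁
  have hmρ : 0 ≤ m * S.ρ := mul_nonneg hm₀ S.hρ₀.le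
  have hm₂ : 0 ≤ m * (m - 1) * S.β₂ ^ 2 / 2 := by
    have := mul_nonneg hm₀ (sub_nonneg.2 hm₁)
    positivity
  have hθ := hA.mul_sq_add_mul_sq_lt hm
  refine ⟨?_, ?_, ?_⟩
  · calc controlRate S S.B (1 - S.σ) = (S.σ - 1) * S.σ * S.β₁ ^ 2 / 2 := by
          rw [controlRate]
          ring
      _ < S.θ := by linarith
  · calc controlRate S S.B (1 - S.σ + m) = (S.σ - m) * (S.σ - 1 - m) * S.β₁ ^ 2 / 2 := by
          rw [controlRate]
          ring
      _ ≤ (S.σ - 1) * S.σ * S.β₁ ^ 2 / 2 := by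
          have : (S.σ - m) * (S.σ - 1 - m) ≤ (S.σ - 1) * S.σ := by nlinarith
          gcongr
      _ < S.θ := by linarith
  · calc controlRate S S.B (1 - S.σ) + habitRate S m
        = (S.σ - 1) * S.σ * S.β₁ ^ 2 / 2 + m * (m - 1) * S.β₂ ^ 2 / 2 - m * S.ρ := by
          rw [controlRate, habitRate]
          ring
      _ < S.θ := by linarith

lemma exists_moment_rates_lt (hA : Assumption1 S) {m : ℝ} (hm : m = max 1 (S.γ * (S.σ - 1))) :
    ∃ r ∈ Ioc 0 S.R, controlRate S r (1 - S.σ) < S.θ ∧ controlRate S r (1 - S.σ + m) < S.θ ∧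
      controlRate S r (1 - S.σ) + habitRate S m < S.θ := by
  obtain ⟨hc, hcm, hg⟩ := hA.moment_rates_lt hm
  have hcont (x : ℝ) : Continuous fun r => controlRate S r x := by
    unfold controlRate
    fun_prop
  have hB : S.B ∈ closure (Ioc 0 S.R) := by
    rw [closure_Ioc S.hR.ne]
    exact ⟨S.hB, hA.1⟩
  exact ((mem_closure_iff_frequently.1 hB).and_eventually
    (((hcont _).continuousAt.eventually_lt_const hc).and
      (((hcont _).continuousAt.eventually_lt_const hcm).and
        (((hcont _).add continuous_const).continuousAt.eventually_lt_const hg)))).exists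

end Assumption1

lemma Vcost_ne_top {S : Setting Ω} (hA : Assumption1 S) {k h : ℝ} (hk : 0 < k) (hh : 0 < h) :
    Vcost S k h ≠ ⊤ := by
  obtain ⟨r, ⟨hr, hrR⟩, hc, hcm, hg⟩ := hA.exists_moment_rates_lt rfl
  exact ((Vcost_le_Jcost (isAdmissible_proportionalControl hk hh hr hrR)).trans_lt
    (Jcost_proportionalControl_lt_top hk hh hr (le_max_left _ _) (le_max_right _ _) hc hcm hg)).ne

theorem V_continuous_general (S : Setting Ω) (hA : Assumption1 S) :
    (∀ k h : ℝ, 0 < k → 0 < h → V S k h ≠ ⊥) ∧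
      ContinuousOn (fun z : ℝ × ℝ => (V S z.1 z.2).toReal)
        (Set.Ioi (0:ℝ) ×ˢ Set.Ioi (0:ℝ)) := by
  have hbot (k h : ℝ) (hk : 0 < k) (hh : 0 < h) : V S k h ≠ ⊥ := by
    simpa [V] using Vcost_ne_top hA hk hh
  refine ⟨hbot, EReal.continuousOn_toReal.comp (continuousOn_V S) fun z hz => ?_⟩
  have htop : V S z.1 z.2 ≠ ⊤ := by simp [V]
  simpa using ⟨hbot z.1 z.2 hz.1 hz.2, htop⟩

/-- Under Assumption 1 and `γ(σ-1) ≤ 1`, the value function is finite-valued and continuous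
on `(0,∞)²`. -/
theorem V_continuous (S : Setting Ω) (hA : Assumption1 S) (hγσ : S.γ * (S.σ - 1) ≤ 1) :
    (∀ k h : ℝ, 0 < k → 0 < h → V S k h ≠ ⊥) ∧
      ContinuousOn (fun z : ℝ × ℝ => (V S z.1 z.2).toReal)
        (Set.Ioi (0:ℝ) ×ˢ Set.Ioi (0:ℝ)) :=
  V_continuous_general S hA

end HabitModel
end
end
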